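/- arXiv:1712.09199 — 2 statements merged into one kernel-verified Lean document; each statement's English description precedes it below -/
import Mathlib

section
/- Let n ≥ 2, 0 < s ≤ n, and let A ⊂ ℝⁿ be a Borel set with 0 < H^s(A) < ∞. Then there exists a Borel set E ⊂ S^{n-1} with σ(E) = 0 such that for every e ∈ S^{n-1} \ E and every Borel set B ⊂ A with H^s(B) > 0: (1) if s ≤ 1 then dim P_e(B) = s, and (2) if s > 1 then L^1(P_e(B)) > 0. -/
open MeasureTheory Metric
open scoped ENNReal RealInnerProductSpace
open Filter Set Topology

/-!
The bad directions are found by Fubini's theorem and the energy method of Kaufman and Mattila.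

Let `μ` be the restriction of `μH[s]` to `A`. The points where `μ` has infinite upper `s`-density
are `μH[s]`-null (`hausdorffMeasure_density_top`), so up to a null set `A` is the countable union of
pieces `A ∩ G k` on which `μ (ball x r) ≤ k * r ^ s`. The restriction of `μ` to such a piece has
finite `τ`-energy for every `τ < s`.

Unit vectors are replaced by the points `chartVec j y`, whose `j`-th coordinate is `1` and whose
other coordinates `y` lie in `[-1, 1]`; this only rescales the projections. With respect to Lebesgue
measure in `y`, the set where `|⟪chartVec j y, x - z⟫| ≤ ρ` has measure at most a constant times
`(ρ / ‖x - z‖) ^ τ` for `τ ∈ (0, 1]` (`volume_abs_inner_sub_le`). Integrating this against `μ × μ`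
bounds the average over `y` of the mass of `ρ`-balls for the projected measures by `ρ ^ τ` times an
energy (`lintegral_measure_abs_sub_le`). Two consequences hold for almost every `y`.

* If `t < τ < s` and `τ ≤ 1`, summing over dyadic `ρ` shows that the dyadic `t`-densities of the
  projected measure are bounded at almost every point. The mass distribution principle then gives
  positive `t`-dimensional measure to the projection of every set of positive measure.
* If `1 < s`, then `τ = 1` and Fatou's lemma give a finite lower density with respect to Lebesgue
  measure at almost every point. Differentiation of measures shows that the projected measure is
  absolutely continuous.

Both statements concern the projected measure of a whole piece, hence hold for all subsets `B` at
once. The exceptional parameters `y` are Lebesgue-null in dimension `n - 1`, that is, null for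
`μH[n - 1]`, and the map `y ↦ ± chartVec j y / ‖chartVec j y‖` to the sphere is Lipschitz. The upper
bound `dim P_e(B) ≤ s` holds because projections are Lipschitz.
-/

/-! ### Upper densities of finite measures -/

/-- A Vitali covering, at scale `1 / (N + 1)`, of the set where `μ` has infinite upper `s`-density.
The selected balls are disjoint with `r ^ s` at most `μ (ball b r) / (N + 1)`, so that the sum of
the `r ^ s` is at most `μ univ / (N + 1)`. -/
theorem exists_cover_of_density_top {X : Type*} [MetricSpace X] [SecondCountableTopology X]
    [MeasurableSpace X] [BorelSpace X] (μ : Measure X) [IsFiniteMeasure μ] {s : ℝ} (hs : 0 < s)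
    (N : ℕ) :
    ∃ (u : Set X) (r : X → ℝ), u.Countable ∧ (∀ b ∈ u, 0 < r b ∧ r b ≤ 1 / ((N : ℝ) + 1)) ∧
      {x | ∀ k : ℕ, ∃ r > 0, ENNReal.ofReal (k * r ^ s) < μ (ball x r)} ⊆
        ⋃ b : u, closedBall (b : X) (4 * r b) ∧
      ∑' b : u, ENNReal.ofReal (r b) ^ s ≤ μ univ / ((N : ℝ≥0∞) + 1) := by
  set F := {x : X | ∀ k : ℕ, ∃ r > 0, ENNReal.ofReal (k * r ^ s) < μ (ball x r)} with hF
  set δ : ℝ := 1 / ((N : ℝ) + 1) with hδ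
  have hδ0 : 0 < δ := by positivity
  have hδs : 0 < δ ^ s := Real.rpow_pos_of_pos hδ0 s
  -- The first bound on `k` gives the gain `1 / (N + 1)`. The second one forces every ball with
  -- `k * r ^ s < μ (ball x r)` to have radius at most `δ`, because `μ` is finite.
  obtain ⟨k, hk⟩ := exists_nat_ge (max ((N : ℝ) + 1) (μ.real univ / δ ^ s))
  have hk1 : (N : ℝ) + 1 ≤ k := (le_max_left _ _).trans hk
  have hk2 : μ.real univ ≤ k * δ ^ s := (div_le_iff₀ hδs).1 ((le_max_right _ _).trans hk)
  have hk0 : (0 : ℝ) < k := lt_of_lt_of_le (by positivity) hk1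
  have hex : ∀ x : X, ∃ r : ℝ, x ∈ F → 0 < r ∧ ENNReal.ofReal (k * r ^ s) < μ (ball x r) := by
    intro x
    by_cases hx : x ∈ F
    · obtain ⟨r, h1, h2⟩ := hx k
      exact ⟨r, fun _ => ⟨h1, h2⟩⟩
    · exact ⟨0, fun h => absurd h hx⟩
  choose r hr using hex
  have hrδ : ∀ x ∈ F, r x ≤ δ := by
    intro x hx
    obtain ⟨h1, h2⟩ := hr x hx
    by_contra! hlt
    have h3 : δ ^ s ≤ r x ^ s := Real.rpow_le_rpow hδ0.le hlt.le hs.le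
    have h4 : μ (ball x (r x)) ≤ ENNReal.ofReal (k * r x ^ s) := by
      refine (measure_mono (subset_univ _)).trans ?_
      rw [← ofReal_measureReal]
      exact ENNReal.ofReal_le_ofReal (hk2.trans (by gcongr))
    exact absurd h2 (not_lt.2 h4)
  obtain ⟨u, huF, hud, huc⟩ := Vitali.exists_disjoint_subfamily_covering_enlargement_closedBall
    F (fun x => x) r δ hrδ 4 (by norm_num)
  have hcount : u.Countable := by
    refine hud.countable_of_nonempty_interior fun b hb => ?_
    exact ⟨b, ball_subset_interior_closedBall (mem_ball_self (hr b (huF hb)).1)⟩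
  refine ⟨u, r, hcount, fun b hb => ⟨(hr b (huF hb)).1, hrδ b (huF hb)⟩, ?_, ?_⟩
  · intro x hx
    obtain ⟨b, hb, hsub⟩ := huc x hx
    exact mem_iUnion.2 ⟨⟨b, hb⟩, hsub (mem_closedBall_self (hr x hx).1.le)⟩
  · have : Countable u := hcount.to_subtype
    rw [ENNReal.le_div_iff_mul_le (by simp) (by simp), ← ENNReal.tsum_mul_right]
    calc ∑' b : u, ENNReal.ofReal (r b) ^ s * ((N : ℝ≥0∞) + 1)
        ≤ ∑' b : u, μ (closedBall (b : X) (r b)) := by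
          refine ENNReal.tsum_le_tsum fun b => ?_
          obtain ⟨h1, h2⟩ := hr b (huF b.2)
          refine le_trans ?_ (h2.le.trans (measure_mono ball_subset_closedBall))
          rw [mul_comm, ENNReal.ofReal_mul hk0.le, ← ENNReal.ofReal_rpow_of_pos h1]
          gcongr
          simpa using (by exact_mod_cast hk1 : ((N + 1 : ℕ) : ℝ≥0∞) ≤ k)
      _ = μ (⋃ b : u, closedBall (b : X) (r b)) := by
          rw [measure_iUnion]
          · intro a b hab
            exact hud a.2 b.2 (fun h => hab (Subtype.ext h))
          · exact fun b => isClosed_closedBall.measurableSet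
      _ ≤ μ univ := measure_mono (subset_univ _)

/-- The set where a finite measure has infinite upper `s`-density is `μH[s]`-null. Since `μ` is
finite, asking for `k * r ^ s < μ (ball x r)` for every `k` and some `r` already forces `r → 0`. -/
theorem hausdorffMeasure_density_top {X : Type*} [MetricSpace X] [SecondCountableTopology X]
    [MeasurableSpace X] [BorelSpace X] (μ : Measure X) [IsFiniteMeasure μ] {s : ℝ} (hs : 0 < s) :
    μH[s] {x | ∀ k : ℕ, ∃ r > 0, ENNReal.ofReal (k * r ^ s) < μ (ball x r)} = 0 := by
  choose u r hc hr hcov hsum using exists_cover_of_density_top μ hs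
  have : ∀ N, Countable (u N) := fun N => (hc N).to_subtype
  have hdiam : ∀ N (b : u N), ediam (closedBall (b : X) (4 * r N b))
      ≤ ENNReal.ofReal (8 * r N b) := by
    intro N b
    have h := (hr N b b.2).1
    rw [← closedEBall_ofReal (by positivity)]
    refine ediam_closedEBall_le.trans_eq ?_
    rw [← ENNReal.ofReal_ofNat, ← ENNReal.ofReal_mul (by norm_num)]
    ring_nf
  have hlim : Tendsto (fun N : ℕ => (1 : ℝ) / ((N : ℝ) + 1)) atTop (𝓝 0) :=
    tendsto_one_div_add_atTop_nhds_zero_nat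
  refine le_antisymm ((Measure.hausdorffMeasure_le_liminf_tsum (ι := fun N => u N) s _ (l := atTop)
    (fun N => ENNReal.ofReal (8 * (1 / ((N : ℝ) + 1)))) ?_
    (fun N b => closedBall (b : X) (4 * r N b)) ?_ (Eventually.of_forall hcov)).trans ?_) zero_le
  · simpa using ENNReal.tendsto_ofReal (hlim.const_mul 8)
  · refine Eventually.of_forall fun N b => (hdiam N b).trans ?_
    have := (hr N b b.2).2
    gcongr
  · have hb : ∀ N, ∑' b : u N, ediam (closedBall (b : X) (4 * r N b)) ^ s
        ≤ 8 ^ s * (μ univ / ((N : ℝ≥0∞) + 1)) := by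
      intro N
      refine le_trans ?_ (mul_le_mul_right (hsum N) _)
      rw [← ENNReal.tsum_mul_left]
      refine ENNReal.tsum_le_tsum fun b => ?_
      refine (ENNReal.rpow_le_rpow (hdiam N b) hs.le).trans ?_
      rw [ENNReal.ofReal_mul (by norm_num), ENNReal.mul_rpow_of_nonneg _ _ hs.le]
      simp
    have ht : Tendsto (fun N : ℕ => (8 : ℝ≥0∞) ^ s * (μ univ / ((N : ℝ≥0∞) + 1))) atTop
        (𝓝 0) := by
      have h1 : Tendsto (fun N : ℕ => μ univ / ((N : ℝ≥0∞) + 1)) atTop (𝓝 0) := by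
        have := (ENNReal.Tendsto.const_div (a := μ univ) ENNReal.tendsto_nat_nhds_top
          (Or.inr (measure_ne_top μ univ))).comp (tendsto_add_atTop_nat 1)
        simpa [Function.comp_def] using this
      simpa using ENNReal.Tendsto.const_mul h1 (Or.inr (by simp : (8 : ℝ≥0∞) ^ s ≠ ∞))
    calc liminf _ atTop ≤ liminf (fun N : ℕ => (8 : ℝ≥0∞) ^ s * (μ univ / ((N : ℝ≥0∞) + 1))) atTop :=
          liminf_le_liminf (Eventually.of_forall hb)
      _ = 0 := ht.liminf_eq

/-- The condition is closed because `x ↦ μ (ball x r)` is lower semicontinuous for open balls. -/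
theorem isClosed_ball_measure_le {X : Type*} [MetricSpace X] 
    [MeasurableSpace X] (μ : Measure X) (f : ℝ → ℝ≥0∞) :
    IsClosed {x | ∀ r > 0, μ (ball x r) ≤ f r} := by
  simp only [ofPred_forall]
  refine isClosed_iInter fun r => isClosed_iInter fun hr => ?_
  refine isOpen_compl_iff.1 (Metric.isOpen_iff.2 ?_)
  intro x hx
  have hx : f r < μ (ball x r) := not_le.1 hx
  have hu : ball x r = ⋃ n : ℕ, ball x (r - 1 / ((n : ℝ) + 1)) := by
    refine subset_antisymm (fun y hy => ?_) (iUnion_subset fun n => ball_subset_ball ?_)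
    · obtain ⟨n, hn⟩ := exists_nat_one_div_lt (sub_pos.2 (mem_ball.1 hy))
      exact mem_iUnion.2 ⟨n, mem_ball.2 (by linarith)⟩
    · have : (0 : ℝ) < 1 / ((n : ℝ) + 1) := by positivity
      linarith
  have hm : Monotone fun n : ℕ => ball x (r - 1 / ((n : ℝ) + 1)) := by
    intro a b hab
    exact ball_subset_ball (by gcongr)
  rw [hu, hm.measure_iUnion, lt_iSup_iff] at hx
  obtain ⟨n, hn⟩ := hx
  refine ⟨1 / ((n : ℝ) + 1), by positivity, fun y hy => not_le.2 (hn.trans_le ?_)⟩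
  refine measure_mono (ball_subset_ball' ?_)
  rw [dist_comm]
  have := mem_ball.1 hy
  linarith

/-! ### Energies and mass distribution -/

/-- Dyadic decomposition of the Riesz kernel; on the diagonal both sides are `∞`. -/
theorem edist_rpow_neg_le {X : Type*} [MetricSpace X] {τ : ℝ} (hτ : 0 < τ) (x z : X) :
    edist x z ^ (-τ) ≤ 1 + ∑' m : ℕ, (ball x (2 * (1 / 2) ^ m)).indicator
      (fun _ => ENNReal.ofReal (((1 / 2 : ℝ) ^ (m + 1)) ^ (-τ))) z := by
  rcases eq_or_ne x z with rfl | hxz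
  · have : ∑' m : ℕ, (ball x (2 * (1 / 2) ^ m)).indicator
      (fun _ => ENNReal.ofReal (((1 / 2 : ℝ) ^ (m + 1)) ^ (-τ))) x = ∞ := by
      refine top_unique ?_
      rw [← ENNReal.tsum_const_eq_top_of_ne_zero (α := ℕ) one_ne_zero]
      refine ENNReal.tsum_le_tsum fun m => ?_
      rw [indicator_of_mem (mem_ball_self (by positivity))]
      refine ENNReal.one_le_ofReal.2 ?_
      exact Real.one_le_rpow_of_pos_of_le_one_of_nonpos (by positivity)
        (pow_le_one₀ (by norm_num) (by norm_num)) (by linarith)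
    rw [this]; simp
  · have hd : 0 < dist x z := dist_pos.2 hxz
    rw [edist_dist, ENNReal.ofReal_rpow_of_pos hd]
    rcases le_or_gt 1 (dist x z) with h1 | h1
    · refine le_trans ?_ le_self_add
      exact ENNReal.ofReal_le_one.2 (Real.rpow_le_one_of_one_le_of_nonpos h1 (by linarith))
    · obtain ⟨m, hm1, hm2⟩ := exists_nat_pow_near_of_lt_one hd h1.le (y := (1 / 2 : ℝ))
        (by norm_num) (by norm_num)
      refine le_trans ?_ le_add_self
      refine le_trans ?_ (ENNReal.le_tsum m)
      have hp : (0 : ℝ) < (1 / 2) ^ m := by positivity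
      rw [indicator_of_mem (by rw [mem_ball, dist_comm]; linarith)]
      exact ENNReal.ofReal_le_ofReal
        (Real.rpow_le_rpow_of_nonpos (by positivity) hm1.le (by linarith))

/-- A measure with `μ (ball x r) ≤ k * r ^ s` has Riesz potentials of every order `τ < s` bounded
uniformly in `x`. -/
theorem exists_lintegral_edist_rpow_neg_le {X : Type*} [MetricSpace X] [MeasurableSpace X]
    [BorelSpace X] (μ : Measure X) [IsFiniteMeasure μ] {s τ k : ℝ} (hτ : 0 < τ) (hτs : τ < s)
    (_hk : 0 ≤ k) {G : Set X} (hG : ∀ x ∈ G, ∀ r > 0, μ (ball x r) ≤ ENNReal.ofReal (k * r ^ s)) :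
    ∃ C : ℝ≥0∞, C ≠ ∞ ∧ ∀ x ∈ G, ∫⁻ z, edist x z ^ (-τ) ∂μ ≤ C := by
  refine ⟨μ univ + ∑' m : ℕ, ENNReal.ofReal (((1 / 2 : ℝ) ^ (m + 1)) ^ (-τ)) *
    ENNReal.ofReal (k * (2 * (1 / 2) ^ m) ^ s), ?_, fun x hx => ?_⟩
  · refine ENNReal.add_ne_top.2 ⟨measure_ne_top _ _, ?_⟩
    have h : ∀ m : ℕ, ENNReal.ofReal (((1 / 2 : ℝ) ^ (m + 1)) ^ (-τ)) *
        ENNReal.ofReal (k * (2 * (1 / 2) ^ m) ^ s) =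
        ENNReal.ofReal (((1 / 2 : ℝ) ^ (-τ) * k * 2 ^ s) * ((1 / 2 : ℝ) ^ (s - τ)) ^ m) := by
      intro m
      rw [← ENNReal.ofReal_mul (by positivity)]
      congr 1
      rw [pow_succ, Real.mul_rpow (by positivity) (by positivity),
        Real.mul_rpow (by positivity) (by positivity), sub_eq_add_neg,
        Real.rpow_add (by positivity), mul_pow, ← Real.rpow_mul_natCast (by positivity),
        ← Real.rpow_mul_natCast (by positivity), ← Real.rpow_natCast_mul (by positivity),
        ← Real.rpow_natCast_mul (by positivity), mul_comm (m : ℝ) (-τ), mul_comm (m : ℝ) s]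
      ring
    simp_rw [h]
    refine Summable.tsum_ofReal_ne_top (Summable.mul_left _ ?_)
    exact summable_geometric_of_lt_one (by positivity)
      (Real.rpow_lt_one (by norm_num) (by norm_num) (by linarith))
  · calc ∫⁻ z, edist x z ^ (-τ) ∂μ
        ≤ ∫⁻ z, (1 + ∑' m : ℕ, (ball x (2 * (1 / 2) ^ m)).indicator
          (fun _ => ENNReal.ofReal (((1 / 2 : ℝ) ^ (m + 1)) ^ (-τ))) z) ∂μ :=
          lintegral_mono fun z => edist_rpow_neg_le hτ x z
      _ = μ univ + ∑' m : ℕ, ENNReal.ofReal (((1 / 2 : ℝ) ^ (m + 1)) ^ (-τ)) *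
            μ (ball x (2 * (1 / 2) ^ m)) := by
          rw [lintegral_add_left measurable_const, lintegral_tsum]
          · simp [isOpen_ball.measurableSet]
          · exact fun m => (measurable_const.indicator isOpen_ball.measurableSet).aemeasurable
      _ ≤ _ := by
          gcongr with m
          exact hG x hx _ (by positivity)

/-- Mass distribution principle, with the growth of `ν` tested on dyadic balls only. The set `S` is
arbitrary, as needed for images of Borel sets. -/
theorem measure_le_hausdorffMeasure_of_dyadic {Y : Type*} [MetricSpace Y] [MeasurableSpace Y]
    [BorelSpace Y] (ν : Measure Y) {t : ℝ} (ht : 0 < t) {M : ℝ≥0∞} (hM : M ≠ ∞) (hM0 : M ≠ 0)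
    (S : Set Y) (h : ∀ u ∈ S, ∀ m : ℕ,
      ν (closedBall u ((1 / 2) ^ m)) ≤ M * ENNReal.ofReal ((1 / 2) ^ m) ^ t) :
    ν S ≤ M * 2 ^ t * μH[t] S := by
  have hpow : (2 : ℝ≥0∞) ^ t ≠ ∞ := by simp
  have hpow0 : (2 : ℝ≥0∞) ^ t ≠ 0 := by simp
  -- Restricting the outer measure of `ν` to `S` needs no measurability of `S`.
  have key : OuterMeasure.restrict S ν.toOuterMeasure ≤
      OuterMeasure.mkMetric (fun d => M * 2 ^ t * d ^ t) := by
    refine OuterMeasure.le_mkMetric _ _ 1 one_pos fun s hs => ?_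
    rw [OuterMeasure.restrict_apply]
    rcases (s ∩ S).eq_empty_or_nonempty with he | ⟨u, hus, huS⟩
    · rw [he]; simp
    have hle : ∀ m : ℕ, ediam s ≤ ENNReal.ofReal ((1 / 2) ^ m) →
        ν (s ∩ S) ≤ M * ENNReal.ofReal ((1 / 2) ^ m) ^ t := by
      intro m hm
      refine le_trans (measure_mono fun w hw => ?_) (h u huS m)
      rw [← closedEBall_ofReal (by positivity)]
      exact (edist_le_ediam_of_mem hw.1 hus).trans hm
    rcases eq_or_ne (ediam s) 0 with h0 | h0
    · have hlim : Tendsto (fun m : ℕ => M * ENNReal.ofReal ((1 / 2 : ℝ) ^ m) ^ t) atTop (𝓝 0) := by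
        have h1 : Tendsto (fun m : ℕ => ENNReal.ofReal ((1 / 2 : ℝ) ^ m)) atTop (𝓝 0) := by
          simpa using ENNReal.tendsto_ofReal
            (tendsto_pow_atTop_nhds_zero_of_lt_one (r := (1 / 2 : ℝ)) (by norm_num) (by norm_num))
        have h2 := h1.ennrpow_const t
        rw [ENNReal.zero_rpow_of_pos ht] at h2
        simpa using ENNReal.Tendsto.const_mul h2 (Or.inr hM)
      refine (ge_of_tendsto' hlim fun m => hle m (by rw [h0]; exact zero_le)).trans zero_le
    · have hfin : ediam s ≠ ∞ := ne_top_of_le_ne_top ENNReal.one_ne_top hs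
      set d := (ediam s).toReal with hd
      have hd0 : 0 < d := ENNReal.toReal_pos h0 hfin
      have hds : ediam s = ENNReal.ofReal d := (ENNReal.ofReal_toReal hfin).symm
      have hd1 : d ≤ 1 := ENNReal.toReal_le_of_le_ofReal zero_le_one (by simpa using hs)
      obtain ⟨m, hm1, hm2⟩ := exists_nat_pow_near_of_lt_one hd0 hd1 (y := (1 / 2 : ℝ))
        (by norm_num) (by norm_num)
      refine (hle m (by rw [hds]; exact ENNReal.ofReal_le_ofReal hm2)).trans ?_
      rw [mul_assoc, ← ENNReal.mul_rpow_of_nonneg _ _ ht.le, hds, ← ENNReal.ofReal_ofNat,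
        ← ENNReal.ofReal_mul (by norm_num)]
      gcongr
      rw [pow_succ] at hm1
      linarith
  have key2 : (OuterMeasure.mkMetric (fun d => M * 2 ^ t * d ^ t) : OuterMeasure Y) ≤
      (M * 2 ^ t) • OuterMeasure.mkMetric (fun d => d ^ t) :=
    OuterMeasure.mkMetric_mono_smul (ENNReal.mul_ne_top hM hpow) (mul_ne_zero hM0 hpow0)
      (Eventually.of_forall fun d => le_rfl)
  have := (key.trans key2) S
  rw [OuterMeasure.restrict_apply, inter_self, smul_apply] at this
  rw [Measure.hausdorffMeasure, ← OuterMeasure.coe_mkMetric]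
  exact this

/-! ### Families of maps with small sublevel sets -/

section Transversal

variable {Λ X : Type*} [TopologicalSpace Λ] [SecondCountableTopology Λ] [MeasurableSpace Λ]
  [BorelSpace Λ] [MetricSpace X] [SecondCountableTopology X] [MeasurableSpace X] [BorelSpace X]

theorem isClosed_setOf_abs_sub_le {L : Λ → X → ℝ} (hL : Continuous (Function.uncurry L)) (ρ : ℝ) :
    IsClosed {p : (Λ × X) × X | |L p.1.1 p.1.2 - L p.1.1 p.2| ≤ ρ} := by
  have h1 : Continuous fun p : (Λ × X) × X => L p.1.1 p.1.2 :=
    hL.comp (continuous_fst)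
  have h2 : Continuous fun p : (Λ × X) × X => L p.1.1 p.2 :=
    hL.comp (f := fun p : (Λ × X) × X => (p.1.1, p.2)) (by fun_prop)
  exact isClosed_le (h1.sub h2).abs continuous_const

theorem measurable_measure_abs_sub_le {L : Λ → X → ℝ} (hL : Continuous (Function.uncurry L))
    (μ : Measure X) [IsFiniteMeasure μ] (ρ : ℝ) :
    Measurable fun p : Λ × X => μ {z | |L p.1 p.2 - L p.1 z| ≤ ρ} :=
  measurable_measure_prodMk_left (isClosed_setOf_abs_sub_le hL ρ).measurableSet

/-- Fubini: averaging over the parameters the mass of the `ρ`-neighbourhoods of fibres turns the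
sublevel estimate for `L` into the `τ`-energy of `μ`. -/
theorem lintegral_measure_abs_sub_le {L : Λ → X → ℝ} (hL : Continuous (Function.uncurry L))
    (lam : Measure Λ) [IsFiniteMeasure lam] (μ : Measure X) [IsFiniteMeasure μ] {τ ρ : ℝ}
    {C : ℝ≥0∞}
    (hC : ∀ x z, lam {y | |L y x - L y z| ≤ ρ} ≤ C * ENNReal.ofReal ρ ^ τ * edist x z ^ (-τ)) :
    ∫⁻ p : Λ × X, μ {z | |L p.1 p.2 - L p.1 z| ≤ ρ} ∂(lam.prod μ) ≤
      C * ENNReal.ofReal ρ ^ τ * ∫⁻ x, ∫⁻ z, edist x z ^ (-τ) ∂μ ∂μ := by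
  set T : Set ((Λ × X) × X) := {p | |L p.1.1 p.1.2 - L p.1.1 p.2| ≤ ρ} with hT
  have hTm : MeasurableSet T := (isClosed_setOf_abs_sub_le hL ρ).measurableSet
  have hm : Measurable fun q : X × X => edist q.1 q.2 ^ (-τ) :=
    (measurable_edist).pow_const _
  calc ∫⁻ p : Λ × X, μ {z | |L p.1 p.2 - L p.1 z| ≤ ρ} ∂(lam.prod μ)
      = ((lam.prod μ).prod μ) T := by
        rw [Measure.prod_apply hTm]; rfl
    _ = (lam.prod (μ.prod μ)) (MeasurableEquiv.prodAssoc.symm ⁻¹' T) := by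
        rw [← Measure.prodAssoc_prod, ← MeasurableEquiv.map_apply, Measure.map_map
          (MeasurableEquiv.measurable _) (MeasurableEquiv.measurable _)]
        simp
    _ = ∫⁻ q : X × X, lam {y | |L y q.1 - L y q.2| ≤ ρ} ∂(μ.prod μ) := by
        rw [Measure.prod_apply_symm (MeasurableEquiv.measurable _ hTm)]; rfl
    _ ≤ ∫⁻ q : X × X, C * ENNReal.ofReal ρ ^ τ * edist q.1 q.2 ^ (-τ) ∂(μ.prod μ) :=
        lintegral_mono fun q => hC q.1 q.2
    _ = C * ENNReal.ofReal ρ ^ τ * ∫⁻ x, ∫⁻ z, edist x z ^ (-τ) ∂μ ∂μ := by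
        rw [lintegral_const_mul _ hm, lintegral_prod _ hm.aemeasurable]

/-- For almost every parameter `y`, the image of `μ` under `L y` has finite lower density with respect
to Lebesgue measure at almost every point (Fatou's lemma). -/
theorem ae_liminf_lt_top {L : Λ → X → ℝ} (hL : Continuous (Function.uncurry L))
    (lam : Measure Λ) [IsFiniteMeasure lam] (μ : Measure X) [IsFiniteMeasure μ]
    {C : ℝ≥0∞} (hCtop : C ≠ ∞)
    (hC : ∀ ρ > 0, ∀ x z,
      lam {y | |L y x - L y z| ≤ ρ} ≤ C * ENNReal.ofReal ρ ^ (1 : ℝ) * edist x z ^ (-1 : ℝ))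
    (hE : ∫⁻ x, ∫⁻ z, edist x z ^ (-1 : ℝ) ∂μ ∂μ ≠ ∞) :
    ∀ᵐ y ∂lam, ∀ᵐ x ∂μ, liminf (fun m : ℕ => μ {z | |L y x - L y z| ≤ (1 / 2) ^ m} /
      ENNReal.ofReal ((1 / 2) ^ m)) atTop < ∞ := by
  have hmeas : ∀ m : ℕ, Measurable fun p : Λ × X =>
      μ {z | |L p.1 p.2 - L p.1 z| ≤ (1 / 2) ^ m} / ENNReal.ofReal ((1 / 2) ^ m) :=
    fun m => (measurable_measure_abs_sub_le hL μ _).div_const _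
  refine Measure.ae_ae_of_ae_prod (p := fun p : Λ × X =>
    liminf (fun m : ℕ => μ {z | |L p.1 p.2 - L p.1 z| ≤ (1 / 2) ^ m} /
      ENNReal.ofReal ((1 / 2) ^ m)) atTop < ∞) ?_
  refine ae_lt_top (Measurable.liminf hmeas) ?_
  refine ne_top_of_le_ne_top (ENNReal.mul_ne_top hCtop hE) ?_
  refine (lintegral_liminf_le hmeas).trans ?_
  refine liminf_le_of_le (by isBoundedDefault) fun b hb => ?_
  obtain ⟨m, hm⟩ := hb.exists
  refine hm.trans ?_
  have hr : (0 : ℝ) < (1 / 2) ^ m := by positivity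
  have h0 : ENNReal.ofReal ((1 / 2) ^ m) ≠ 0 := (ENNReal.ofReal_pos.2 hr).ne'
  simp only [ENNReal.div_eq_inv_mul]
  rw [lintegral_const_mul _ (measurable_measure_abs_sub_le hL μ ((1 / 2) ^ m)),
    ← ENNReal.div_eq_inv_mul]
  refine ENNReal.div_le_of_le_mul ?_
  refine (lintegral_measure_abs_sub_le hL lam μ (τ := 1) (hC _ (by positivity))).trans_eq ?_
  rw [ENNReal.rpow_one]
  ring

/-- For almost every parameter `y`, the dyadic `t`-densities of the image of `μ` under `L y` are
summable at almost every point. The gap `t < τ` makes the series geometric. -/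
theorem ae_tsum_lt_top {L : Λ → X → ℝ} (hL : Continuous (Function.uncurry L))
    (lam : Measure Λ) [IsFiniteMeasure lam] (μ : Measure X) [IsFiniteMeasure μ]
    {t τ : ℝ} (htτ : t < τ) {C : ℝ≥0∞} (hCtop : C ≠ ∞)
    (hC : ∀ ρ > 0, ∀ x z,
      lam {y | |L y x - L y z| ≤ ρ} ≤ C * ENNReal.ofReal ρ ^ τ * edist x z ^ (-τ))
    (hE : ∫⁻ x, ∫⁻ z, edist x z ^ (-τ) ∂μ ∂μ ≠ ∞) :
    ∀ᵐ y ∂lam, ∀ᵐ x ∂μ, ∑' m : ℕ, μ {z | |L y x - L y z| ≤ (1 / 2) ^ m} /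
      ENNReal.ofReal ((1 / 2) ^ m) ^ t < ∞ := by
  have hmeas : ∀ m : ℕ, Measurable fun p : Λ × X =>
      μ {z | |L p.1 p.2 - L p.1 z| ≤ (1 / 2) ^ m} / ENNReal.ofReal ((1 / 2) ^ m) ^ t :=
    fun m => (measurable_measure_abs_sub_le hL μ _).div_const _
  refine Measure.ae_ae_of_ae_prod (p := fun p : Λ × X =>
    ∑' m : ℕ, μ {z | |L p.1 p.2 - L p.1 z| ≤ (1 / 2) ^ m} /
      ENNReal.ofReal ((1 / 2) ^ m) ^ t < ∞) ?_
  refine ae_lt_top (Measurable.tsum hmeas) ?_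
  rw [lintegral_tsum fun m => (hmeas m).aemeasurable]
  set J := ∫⁻ x, ∫⁻ z, edist x z ^ (-τ) ∂μ ∂μ with hJ
  have hterm : ∀ m : ℕ, ∫⁻ p : Λ × X, μ {z | |L p.1 p.2 - L p.1 z| ≤ (1 / 2) ^ m} /
      ENNReal.ofReal ((1 / 2) ^ m) ^ t ∂(lam.prod μ) ≤
      C * J * ENNReal.ofReal (((1 / 2 : ℝ) ^ (τ - t)) ^ m) := by
    intro m
    have hr : (0 : ℝ) < (1 / 2) ^ m := by positivity
    simp only [ENNReal.div_eq_inv_mul]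
    rw [lintegral_const_mul _ (measurable_measure_abs_sub_le hL μ ((1 / 2) ^ m)),
      ← ENNReal.div_eq_inv_mul]
    refine ENNReal.div_le_of_le_mul ?_
    refine (lintegral_measure_abs_sub_le hL lam μ (hC _ (by positivity))).trans_eq ?_
    rw [mul_assoc (C * J), mul_assoc C J, mul_comm J, ← mul_assoc C]
    congr 2
    rw [ENNReal.ofReal_rpow_of_pos hr, ENNReal.ofReal_rpow_of_pos hr,
      ← ENNReal.ofReal_mul (by positivity)]
    congr 1
    rw [← Real.rpow_mul_natCast (by positivity), ← Real.rpow_natCast_mul (by positivity),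
      ← Real.rpow_natCast_mul (by positivity), ← Real.rpow_add (by positivity)]
    congr 1
    ring
  refine ne_top_of_le_ne_top ?_ (ENNReal.tsum_le_tsum hterm)
  rw [ENNReal.tsum_mul_left]
  refine ENNReal.mul_ne_top (ENNReal.mul_ne_top hCtop hE) ?_
  refine Summable.tsum_ofReal_ne_top ?_
  exact summable_geometric_of_lt_one (by positivity)
      (Real.rpow_lt_one (by norm_num) (by norm_num) (by linarith))

end Transversal

theorem exists_nat_measure_setOf_lt_ne_zero {X : Type*} [MeasurableSpace X] {μ : Measure X}
    {f : X → ℝ≥0∞} (hf : ∀ᵐ x ∂μ, f x < ∞) {B : Set X} (hB : μ B ≠ 0) :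
    ∃ M : ℕ, μ {x ∈ B | f x < M} ≠ 0 := by
  by_contra! h
  refine hB (measure_mono_null (t := (⋃ M : ℕ, {x ∈ B | f x < M}) ∪ {x | ¬ f x < ∞})
    (fun x hx => ?_) (measure_union_null (measure_iUnion_null h) hf))
  by_cases hfx : f x < ∞
  · obtain ⟨M, hM⟩ := ENNReal.exists_nat_gt hfx.ne
    exact Or.inl (mem_iUnion.2 ⟨M, hx, hM⟩)
  · exact Or.inr hfx

theorem map_closedBall_eq {X : Type*} [TopologicalSpace X] [MeasurableSpace X]
    [OpensMeasurableSpace X] (μ : Measure X) {f : X → ℝ} (hf : Continuous f) (x : X) (r : ℝ) :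
    μ.map f (closedBall (f x) r) = μ {z | |f x - f z| ≤ r} := by
  rw [Measure.map_apply hf.measurable isClosed_closedBall.measurableSet]
  congr 1
  ext z
  simp [Real.dist_eq, abs_sub_comm]

/-- A pushforward measure on `ℝ` whose lower density is finite almost everywhere does not charge
Lebesgue-null sets; here `B` and its image need not be measurable. -/
theorem volume_image_pos {X : Type*} [TopologicalSpace X] [MeasurableSpace X]
    [OpensMeasurableSpace X] (μ : Measure X) [IsFiniteMeasure μ] {f : X → ℝ} (hf : Continuous f)
    (h : ∀ᵐ x ∂μ, liminf (fun m : ℕ => μ {z | |f x - f z| ≤ (1 / 2) ^ m} /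
      ENNReal.ofReal ((1 / 2) ^ m)) atTop < ∞) {B : Set X} (hB : μ B ≠ 0) :
    0 < volume (f '' B) := by
  obtain ⟨M, hM⟩ := exists_nat_measure_setOf_lt_ne_zero h hB
  set S := {x ∈ B | liminf (fun m : ℕ => μ {z | |f x - f z| ≤ (1 / 2) ^ m} /
      ENNReal.ofReal ((1 / 2) ^ m)) atTop < M} with hS
  have hle : μ.map f (f '' S) ≤ ((M : NNReal) • (volume : Measure ℝ)) (f '' S) := by
    -- The Vitali family of the pushforward itself makes the absolute continuity hypothesis trivial.
    refine (Besicovitch.vitaliFamily (μ.map f)).measure_le_of_frequently_le _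
      Measure.AbsolutelyContinuous.rfl _ ?_
    rintro _ ⟨x, hx, rfl⟩
    have ht : Tendsto (fun m : ℕ => (1 / 2 : ℝ) ^ m) atTop (𝓝[>] 0) :=
      tendsto_nhdsWithin_iff.2 ⟨tendsto_pow_atTop_nhds_zero_of_lt_one (by norm_num) (by norm_num),
        Eventually.of_forall fun m => by simp⟩
    refine ((Besicovitch.tendsto_filterAt (μ.map f) (f x)).comp ht).frequently ?_
    refine (frequently_lt_of_liminf_lt (by isBoundedDefault) hx.2).mono fun m hm => ?_
    have hr : (0 : ℝ) < (1 / 2) ^ m := by positivity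
    rw [Function.comp_apply, map_closedBall_eq μ hf, Measure.smul_apply, Real.volume_closedBall]
    rw [ENNReal.div_lt_iff (Or.inl (ENNReal.ofReal_pos.2 hr).ne') (Or.inl ENNReal.ofReal_ne_top)]
      at hm
    refine hm.le.trans ?_
    rw [ENNReal.smul_def, smul_eq_mul]
    gcongr
    · simp
    · linarith
  refine pos_of_ne_zero fun h0 => hM ?_
  have h1 : volume (f '' S) = 0 := measure_mono_null (image_mono (sep_subset _ _)) h0
  rw [Measure.smul_apply, h1, smul_zero] at hle
  exact le_antisymm ((Measure.le_map_apply_image hf.measurable.aemeasurable S).trans hle) zero_le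

/-- Summability of the dyadic `t`-densities bounds each of them, so that the mass distribution
principle applies to the image. -/
theorem hausdorffMeasure_image_ne_zero {X : Type*} [TopologicalSpace X] [MeasurableSpace X]
    [OpensMeasurableSpace X] (μ : Measure X) {f : X → ℝ} (hf : Continuous f)
    {t : ℝ} (ht : 0 < t)
    (h : ∀ᵐ x ∂μ, ∑' m : ℕ, μ {z | |f x - f z| ≤ (1 / 2) ^ m} /
      ENNReal.ofReal ((1 / 2) ^ m) ^ t < ∞) {B : Set X} (hB : μ B ≠ 0) :
    μH[t] (f '' B) ≠ 0 := by
  obtain ⟨M, hM⟩ := exists_nat_measure_setOf_lt_ne_zero h hB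
  set S := {x ∈ B | ∑' m : ℕ, μ {z | |f x - f z| ≤ (1 / 2) ^ m} /
      ENNReal.ofReal ((1 / 2) ^ m) ^ t < M} with hS
  have hM0 : (M : ℝ≥0∞) ≠ 0 := by
    rintro h0
    refine hM (by simp [hS, h0])
  have hle := measure_le_hausdorffMeasure_of_dyadic (μ.map f) ht (ENNReal.natCast_ne_top M) hM0
    (f '' S) (by
      rintro _ ⟨x, hx, rfl⟩ m
      have hr : (0 : ℝ) < (1 / 2) ^ m := by positivity
      rw [map_closedBall_eq μ hf]
      have := (ENNReal.le_tsum m).trans hx.2.le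
      rwa [ENNReal.div_le_iff (ENNReal.rpow_pos (ENNReal.ofReal_pos.2 hr)
        ENNReal.ofReal_ne_top).ne' (ENNReal.rpow_ne_top_of_nonneg ht.le ENNReal.ofReal_ne_top)]
        at this)
  intro h0
  refine hM ?_
  rw [measure_mono_null (image_mono (sep_subset _ _)) h0, mul_zero] at hle
  exact le_antisymm ((Measure.le_map_apply_image hf.measurable.aemeasurable S).trans hle) zero_le

/-- Abstract form of the projection theorem. If the family `L` satisfies the sublevel estimate `hC` for
all exponents in `(0, 1]`, then for almost every parameter `y` all subsets of `A` of positive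
`μH[s]`-measure simultaneously have large images. The quantifier over `B` comes after that over `y`:
the densities are controlled for the countably many restrictions of `μH[s]` to the pieces `A ∩ G k`
(and for rational exponents), and a subset of positive measure meets one of the pieces in positive
measure. On the diagonal `x = z` the right-hand side of `hC` is `∞` when `C ≠ 0`. -/
theorem ae_image_large {Λ X : Type*} [TopologicalSpace Λ] [SecondCountableTopology Λ]
    [MeasurableSpace Λ] [BorelSpace Λ] [MetricSpace X] [SecondCountableTopology X]
    [MeasurableSpace X] [BorelSpace X] {s : ℝ} (hs : 0 < s) {A : Set X} (hA : MeasurableSet A)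
    (hA1 : μH[s] A < ∞) {L : Λ → X → ℝ} (hL : Continuous (Function.uncurry L))
    (lam : Measure Λ) [IsFiniteMeasure lam] {C : ℝ≥0∞} (hCtop : C ≠ ∞)
    (hC : ∀ τ : ℝ, 0 < τ → τ ≤ 1 → ∀ ρ > 0, ∀ x z,
      lam {y | |L y x - L y z| ≤ ρ} ≤ C * ENNReal.ofReal ρ ^ τ * edist x z ^ (-τ)) :
    ∀ᵐ y ∂lam, ∀ B ⊆ A, 0 < μH[s] B →
      (∀ q : ℚ, 0 < (q : ℝ) → (q : ℝ) < s → (q : ℝ) < 1 →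
        ENNReal.ofReal q ≤ dimH (L y '' B)) ∧
      (1 < s → 0 < volume (L y '' B)) := by
  set μ : Measure X := (μH[s]).restrict A with hμ
  have : IsFiniteMeasure μ := isFiniteMeasure_restrict.2 hA1.ne
  set G : ℕ → Set X := fun k => {x | ∀ r > 0, μ (ball x r) ≤ ENNReal.ofReal (k * r ^ s)} with hG
  have hGm : ∀ k, MeasurableSet (G k) := fun k =>
    (isClosed_ball_measure_le μ fun r => ENNReal.ofReal (k * r ^ s)).measurableSet
  have hGex : ∀ B ⊆ A, 0 < μH[s] B → ∃ k, μ.restrict (G k) B ≠ 0 := by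
    intro B hBA hB
    by_contra! h
    refine hB.ne' (measure_mono_null (t := (⋃ k, B ∩ G k) ∪ {x | ∀ k : ℕ, ∃ r > 0,
      ENNReal.ofReal (k * r ^ s) < μ (ball x r)}) (fun x hx => ?_)
      (measure_union_null (measure_iUnion_null fun k => ?_) (hausdorffMeasure_density_top μ hs)))
    · by_cases hxG : ∃ k, x ∈ G k
      · obtain ⟨k, hk⟩ := hxG
        exact Or.inl (mem_iUnion.2 ⟨k, hx, hk⟩)
      · refine Or.inr fun k => ?_
        have := fun h => hxG ⟨k, h⟩
        simpa [hG] using this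
    · have := h k
      rwa [Measure.restrict_apply' (hGm k), hμ, Measure.restrict_apply' hA,
        inter_eq_self_of_subset_left (inter_subset_left.trans hBA)] at this
  have hE : ∀ k, ∀ τ : ℝ, 0 < τ → τ < s →
      ∫⁻ x, ∫⁻ z, edist x z ^ (-τ) ∂(μ.restrict (G k)) ∂(μ.restrict (G k)) ≠ ∞ := by
    intro k τ hτ hτs
    obtain ⟨D, hD, hDle⟩ := exists_lintegral_edist_rpow_neg_le μ hτ hτs (Nat.cast_nonneg k)
      (G := G k) (fun x hx => hx)
    refine ne_top_of_le_ne_top (ENNReal.mul_ne_top hD (measure_ne_top (μ.restrict (G k)) univ)) ?_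
    rw [← lintegral_const]
    refine lintegral_mono_ae ?_
    filter_upwards [ae_restrict_mem (hGm k)] with x hx
    exact (lintegral_mono' Measure.restrict_le_self le_rfl).trans (hDle x hx)
  have h1 : ∀ᵐ y ∂lam, ∀ k, 1 < s → ∀ᵐ x ∂(μ.restrict (G k)),
      liminf (fun m : ℕ => μ.restrict (G k) {z | |L y x - L y z| ≤ (1 / 2) ^ m} /
        ENNReal.ofReal ((1 / 2) ^ m)) atTop < ∞ := by
    refine ae_all_iff.2 fun k => ?_
    by_cases h : 1 < s
    · filter_upwards [ae_liminf_lt_top hL lam (μ.restrict (G k)) hCtop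
        (hC 1 one_pos le_rfl) (hE k 1 one_pos h)] with y hy _ using hy
    · exact Eventually.of_forall fun y h' => absurd h' h
  have h2 : ∀ᵐ y ∂lam, ∀ k, ∀ q : ℚ, 0 < (q : ℝ) → (q : ℝ) < s → (q : ℝ) < 1 →
      ∀ᵐ x ∂(μ.restrict (G k)),
        ∑' m : ℕ, μ.restrict (G k) {z | |L y x - L y z| ≤ (1 / 2) ^ m} /
          ENNReal.ofReal ((1 / 2) ^ m) ^ (q : ℝ) < ∞ := by
    refine ae_all_iff.2 fun k => ae_all_iff.2 fun q => ?_
    by_cases h : 0 < (q : ℝ) ∧ (q : ℝ) < s ∧ (q : ℝ) < 1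
    · obtain ⟨τ, hτ1, hτ2⟩ := exists_between (lt_min h.2.1 h.2.2)
      have hτ0 : 0 < τ := h.1.trans hτ1
      filter_upwards [ae_tsum_lt_top hL lam (μ.restrict (G k)) hτ1 hCtop
        (hC τ hτ0 (hτ2.le.trans (min_le_right _ _)))
        (hE k τ hτ0 (hτ2.trans_le (min_le_left _ _)))] with y hy _ _ _ using hy
    · exact Eventually.of_forall fun y a b c => absurd ⟨a, b, c⟩ h
  filter_upwards [h1, h2] with y hy1 hy2 B hBA hB
  have hLy : Continuous (L y) := hL.comp (Continuous.prodMk_right y)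
  obtain ⟨k, hk⟩ := hGex B hBA hB
  refine ⟨fun q hq0 hqs hq1 => ?_, fun hs1 => volume_image_pos _ hLy (hy1 k hs1) hk⟩
  have := hausdorffMeasure_image_ne_zero _ hLy hq0 (hy2 k q hq0 hqs hq1) hk
  refine le_dimH_of_hausdorffMeasure_ne_zero (d := (q : ℝ).toNNReal) ?_
  rwa [Real.coe_toNNReal _ hq0.le]

/-! ### Affine charts of the space of directions -/

section Chart

variable {ι : Type*} [Fintype ι]

/-- The slab `|b + ⟨a, y⟩| ≤ ρ` in the cube `[-1, 1]^ι`: the shear replacing the coordinate `y i` by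
`⟨a, y⟩` has determinant `a i` and maps it into a box with one side of length `2 * ρ`. -/
theorem volume_slab_le [DecidableEq ι] (a : ι → ℝ) (b : ℝ) {ρ : ℝ} (hρ : 0 < ρ) (i : ι) (hi : a i ≠ 0) :
    volume.restrict (Icc (-1 : ι → ℝ) 1) {y | |b + ∑ k, a k * y k| ≤ ρ} ≤
      ENNReal.ofReal (2 ^ (Fintype.card ι + 1) * (ρ / |a i|)) := by
  set f : (ι → ℝ) →ₗ[ℝ] (ι → ℝ) := Matrix.toLin' (Matrix.updateRow 1 i a) with hf
  have hfi : ∀ y, f y i = ∑ k, a k * y k := by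
    intro y
    simp [hf, Matrix.mulVec, dotProduct]
  have hfk : ∀ y k, k ≠ i → f y k = y k := by
    intro y k hk
    simp [hf, Matrix.mulVec, dotProduct, Matrix.updateRow_ne hk, Matrix.one_apply]
  have hdet : LinearMap.det f = a i := by
    rw [hf, LinearMap.det_toLin', ← Matrix.det_transpose, ← Matrix.updateCol_transpose,
      ← Matrix.cramer_apply, Matrix.transpose_one, Matrix.cramer_one]
    rfl
  set lo : ι → ℝ := Function.update (-1) i (-b - ρ) with hlo
  set hi' : ι → ℝ := Function.update 1 i (-b + ρ) with hhi
  have hsub : {y | |b + ∑ k, a k * y k| ≤ ρ} ∩ Icc (-1 : ι → ℝ) 1 ⊆ f ⁻¹' Icc lo hi' := by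
    rintro y ⟨hy, hy1, hy2⟩
    have hy : |b + ∑ k, a k * y k| ≤ ρ := hy
    have hy := abs_le.1 hy
    refine ⟨fun k => ?_, fun k => ?_⟩
    · rcases eq_or_ne k i with rfl | hk
      · rw [hfi]; simp [hlo]; linarith
      · rw [hfk _ _ hk]; simpa [hlo, hk] using hy1 k
    · rcases eq_or_ne k i with rfl | hk
      · rw [hfi]; simp [hhi]; linarith
      · rw [hfk _ _ hk]; simpa [hhi, hk] using hy2 k
  rw [Measure.restrict_apply' measurableSet_Icc]
  refine (measure_mono hsub).trans ?_
  rw [Measure.addHaar_preimage_linearMap _ (by rwa [hdet]), hdet, Real.volume_Icc_pi,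
    ← ENNReal.ofReal_prod_of_nonneg, ← ENNReal.ofReal_mul (abs_nonneg _)]
  · refine ENNReal.ofReal_le_ofReal ?_
    have hprod : ∏ k, (hi' k - lo k) ≤ (2 * ρ) * 2 ^ Fintype.card ι := by
      rw [← Finset.mul_prod_erase _ _ (Finset.mem_univ i)]
      have h1 : hi' i - lo i = 2 * ρ := by simp [hhi, hlo]; ring
      have h2 : ∏ k ∈ Finset.univ.erase i, (hi' k - lo k) = 2 ^ (Finset.univ.erase i).card := by
        refine Finset.prod_eq_pow_card fun k hk => ?_
        have := Finset.ne_of_mem_erase hk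
        simp [hhi, hlo, this]; norm_num
      rw [h1, h2]
      gcongr
      · norm_num
      · exact Finset.card_le_univ _
    calc |(a i)⁻¹| * ∏ k, (hi' k - lo k) ≤ |(a i)⁻¹| * ((2 * ρ) * 2 ^ Fintype.card ι) := by gcongr
      _ = _ := by rw [abs_inv, pow_succ]; field_simp
  · intro k _
    rcases eq_or_ne k i with rfl | hk
    · simp [hhi, hlo]; linarith
    · simp [hhi, hlo, hk]

end Chart

/-- The point with coordinate `1` at `j` and coordinates `y` elsewhere: the `j`-th affine chart of
projective space. The remaining indices form the subtype `{i // i ≠ j}`, and the sup norm on the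
parameter space makes the chart domain `‖y‖ ≤ 1` a cube. -/
noncomputable def chartVec {n : ℕ} (j : Fin n) (y : {i : Fin n // i ≠ j} → ℝ) :
    EuclideanSpace ℝ (Fin n) :=
  WithLp.toLp 2 fun i => if h : i = j then 1 else y ⟨i, h⟩

theorem inner_chartVec {n : ℕ} (j : Fin n) (y : {i : Fin n // i ≠ j} → ℝ)
    (x : EuclideanSpace ℝ (Fin n)) :
    ⟪chartVec j y, x⟫ = x j + ∑ k : {i : Fin n // i ≠ j}, x k * y k := by
  rw [PiLp.inner_apply, Fintype.sum_eq_add_sum_subtype_ne _ j]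
  congr 1
  · simp [chartVec]
  · refine Finset.sum_congr rfl fun k _ => ?_
    simp [chartVec, k.2]

theorem one_le_norm_chartVec {n : ℕ} (j : Fin n) (y : {i : Fin n // i ≠ j} → ℝ) :
    1 ≤ ‖chartVec j y‖ := by
  have h := PiLp.norm_apply_le (chartVec j y) j
  simpa [chartVec] using h

theorem lipschitzWith_chartVec {n : ℕ} (j : Fin n) :
    ∃ K, LipschitzWith K (chartVec j : ({i : Fin n // i ≠ j} → ℝ) → _) := by
  have h : LipschitzWith 1 fun (y : {i : Fin n // i ≠ j} → ℝ) (i : Fin n) =>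
      if h : i = j then (1 : ℝ) else y ⟨i, h⟩ := by
    refine LipschitzWith.of_edist_le fun y z => (edist_pi_le_iff).2 fun i => ?_
    by_cases hi : i = j
    · simp [hi]
    · simpa [hi] using edist_le_pi_edist y z ⟨i, hi⟩
  exact ⟨_, (PiLp.lipschitzWith_toLp 2 fun _ : Fin n => ℝ).comp h⟩

theorem lipschitzOnWith_normalize {E : Type*} [NormedAddCommGroup E] [NormedSpace ℝ E] :
    LipschitzOnWith 2 (fun v : E => ‖v‖⁻¹ • v) {v | 1 ≤ ‖v‖} := by
  refine LipschitzOnWith.of_dist_le_mul fun x hx y hy => ?_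
  have hx1 : 1 ≤ ‖x‖ := hx
  have hy1 : 1 ≤ ‖y‖ := hy
  have hx0 : 0 < ‖x‖ := by linarith
  have hy0 : 0 < ‖y‖ := by linarith
  rw [dist_eq_norm, dist_eq_norm]
  have h1 : ‖x‖⁻¹ • x - ‖y‖⁻¹ • y = ‖x‖⁻¹ • (x - y) + (‖x‖⁻¹ - ‖y‖⁻¹) • y := by
    rw [smul_sub, sub_smul]; abel
  have h2 : ‖(‖x‖⁻¹ - ‖y‖⁻¹) • y‖ ≤ ‖x - y‖ := by
    have : (‖x‖⁻¹ - ‖y‖⁻¹) = ‖x‖⁻¹ * ((‖y‖ - ‖x‖) * ‖y‖⁻¹) := by field_simp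
    rw [norm_smul, this, norm_mul, norm_mul, norm_inv, norm_inv, norm_norm, norm_norm,
      mul_assoc, mul_assoc, inv_mul_cancel₀ hy0.ne', mul_one, Real.norm_eq_abs, norm_sub_rev]
    exact (mul_le_of_le_one_left (abs_nonneg _) (inv_le_one_of_one_le₀ hx1)).trans
      (abs_norm_sub_norm_le y x)
  have h3 : ‖‖x‖⁻¹ • (x - y)‖ ≤ ‖x - y‖ := by
    rw [norm_smul, norm_inv, norm_norm]
    exact mul_le_of_le_one_left (norm_nonneg _) (inv_le_one_of_one_le₀ hx1)
  rw [h1]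
  push_cast
  linarith [norm_add_le (‖x‖⁻¹ • (x - y)) ((‖x‖⁻¹ - ‖y‖⁻¹) • y)]

theorem norm_le_sum_abs {n : ℕ} (x : EuclideanSpace ℝ (Fin n)) : ‖x‖ ≤ ∑ i, |x i| := by
  rw [EuclideanSpace.norm_eq]
  refine Real.sqrt_le_iff.2 ⟨Finset.sum_nonneg fun _ _ => abs_nonneg _, ?_⟩
  simp only [Real.norm_eq_abs]
  exact Finset.sum_sq_le_sq_sum_of_nonneg fun i _ => abs_nonneg (x i)

theorem volume_cube_le {n : ℕ} (j : Fin n) (S : Set ({i : Fin n // i ≠ j} → ℝ)) :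
    volume.restrict (Icc (-1) 1) S ≤ ENNReal.ofReal (2 ^ n) := by
  refine (measure_mono (subset_univ S)).trans ?_
  rw [Measure.restrict_apply_univ, Real.volume_Icc_pi]
  have : ∀ i : {i : Fin n // i ≠ j},
      ENNReal.ofReal ((1 : {i : Fin n // i ≠ j} → ℝ) i - (-1 : {i : Fin n // i ≠ j} → ℝ) i) = 2 := by
    intro i; simp; norm_num
  rw [Finset.prod_congr rfl fun i _ => this i, Finset.prod_const, ENNReal.ofReal_pow (by norm_num)]
  simp only [ENNReal.ofReal_ofNat]
  refine pow_le_pow_right₀ (by norm_num) ?_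
  simpa using Fintype.card_subtype_le fun i : Fin n => i ≠ j

/-- Either the `j`-th coordinate of `x` dominates, and then the set is empty unless `ρ` is comparable
to `‖x‖`, or some coordinate `x k` with `k ≠ j` is comparable to `‖x‖` and `volume_slab_le` applies. -/
theorem volume_abs_inner_le {n : ℕ} (j : Fin n) {x : EuclideanSpace ℝ (Fin n)} (hx : x ≠ 0)
    {ρ : ℝ} (hρ : 0 < ρ) :
    volume.restrict (Icc (-1) 1) {y | |⟪chartVec j y, x⟫| ≤ ρ} ≤
      ENNReal.ofReal (2 ^ (n + 1) * (3 * n + 4) * (ρ / ‖x‖)) := by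
  have hx0 : 0 < ‖x‖ := norm_pos_iff.2 hx
  set Sg : ℝ := ∑ k : {i : Fin n // i ≠ j}, |x k| with hSg
  have hnorm : ‖x‖ ≤ |x j| + Sg := by
    refine (norm_le_sum_abs x).trans_eq ?_
    rw [Fintype.sum_eq_add_sum_subtype_ne _ j]
  have hSg0 : 0 ≤ Sg := Finset.sum_nonneg fun _ _ => abs_nonneg _
  rcases le_total (2 * Sg) |x j| with hcase | hcase
  · by_cases hne : ({y | |⟪chartVec j y, x⟫| ≤ ρ} ∩ Icc (-1) 1).Nonempty
    · obtain ⟨y, hy, hy1, hy2⟩ := hne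
      have hy : |⟪chartVec j y, x⟫| ≤ ρ := hy
      rw [inner_chartVec] at hy
      have hs : |∑ k : {i : Fin n // i ≠ j}, x k * y k| ≤ Sg := by
        refine (Finset.abs_sum_le_sum_abs _ _).trans (Finset.sum_le_sum fun k _ => ?_)
        rw [abs_mul]
        exact mul_le_of_le_one_right (abs_nonneg _) (abs_le.2 ⟨hy1 k, hy2 k⟩)
      have h3 : |x j| ≤ ρ + Sg := by
        have := abs_sub (x j + ∑ k : {i : Fin n // i ≠ j}, x k * y k)
          (∑ k : {i : Fin n // i ≠ j}, x k * y k)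
        rw [add_sub_cancel_right] at this
        linarith
      have h4 : ‖x‖ ≤ 4 * ρ := by linarith
      refine (volume_cube_le j _).trans (ENNReal.ofReal_le_ofReal ?_)
      have h5 : 1 ≤ 4 * (ρ / ‖x‖) := by
        rw [← mul_div_assoc, le_div_iff₀ hx0]; linarith
      have h6 : (0 : ℝ) < 2 ^ n := by positivity
      have h7 : 0 ≤ (3 * n : ℝ) * (ρ / ‖x‖) := by positivity
      calc (2 : ℝ) ^ n = 2 ^ n * 1 := by ring
        _ ≤ 2 ^ (n + 1) * (3 * n * (ρ / ‖x‖) + 4 * (ρ / ‖x‖)) := by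
            gcongr
            · norm_num
            · omega
            · linarith
        _ = _ := by ring
    · rw [Measure.restrict_apply' measurableSet_Icc, not_nonempty_iff_eq_empty.1 hne]
      simp
  · have h1 : ‖x‖ ≤ 3 * Sg := by linarith
    have h2 : ∃ k : {i : Fin n // i ≠ j}, ‖x‖ ≤ 3 * n * |x k| := by
      by_contra! h
      have hcard : (Fintype.card {i : Fin n // i ≠ j} : ℝ) ≤ n := by
        have h := Fintype.card_subtype_le fun i : Fin n => i ≠ j
        rw [Fintype.card_fin] at h
        exact_mod_cast h
      have hn0 : (0 : ℝ) < n := by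
        exact_mod_cast (Fin.pos j)
      have hnonempty : Nonempty {i : Fin n // i ≠ j} := by
        by_contra hempty
        rw [not_nonempty_iff] at hempty
        have : Sg = 0 := by simp [hSg]
        linarith
      have : Sg < ∑ k : {i : Fin n // i ≠ j}, ‖x‖ / (3 * n) := by
        refine Finset.sum_lt_sum_of_nonempty Finset.univ_nonempty fun k _ => ?_
        rw [lt_div_iff₀ (by positivity)]
        linarith [h k]
      rw [Finset.sum_const, nsmul_eq_mul, Finset.card_univ] at this
      have h5 : (Fintype.card {i : Fin n // i ≠ j} : ℝ) * (‖x‖ / (3 * n)) ≤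
        n * (‖x‖ / (3 * n)) := by gcongr
      have h6 : (n : ℝ) * (‖x‖ / (3 * n)) = ‖x‖ / 3 := by field_simp
      linarith
    obtain ⟨k, hk⟩ := h2
    have hn0 : (0 : ℝ) < n := by exact_mod_cast (Fin.pos j)
    have hk0 : 0 < |x k| := by
      by_contra! h
      have : |x k| = 0 := le_antisymm h (abs_nonneg _)
      rw [this] at hk
      linarith
    have hv := volume_slab_le (fun k : {i : Fin n // i ≠ j} => x k) (x j) hρ k (abs_pos.1 hk0)
    simp_rw [inner_chartVec]
    refine hv.trans (ENNReal.ofReal_le_ofReal ?_)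
    have hcard : Fintype.card {i : Fin n // i ≠ j} ≤ n := by
      have h := Fintype.card_subtype_le fun i : Fin n => i ≠ j
      rwa [Fintype.card_fin] at h
    calc (2 : ℝ) ^ (Fintype.card {i : Fin n // i ≠ j} + 1) * (ρ / |x k|)
        ≤ 2 ^ (n + 1) * ((3 * n + 4) * (ρ / ‖x‖)) := by
          gcongr
          · norm_num
          · rw [← mul_div_assoc, div_le_div_iff₀ hk0 hx0]
            have : ρ * ‖x‖ ≤ ρ * (3 * n * |x k|) := by gcongr
            have : 0 ≤ 4 * ρ * |x k| := by positivity
            linarith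
      _ = _ := by ring

/-- The sublevel estimate required by `ae_image_large`, from `min 1 a ≤ a ^ τ` for `0 < τ ≤ 1`. -/
theorem volume_abs_inner_sub_le {n : ℕ} (j : Fin n) {τ : ℝ} (hτ : 0 < τ) (hτ1 : τ ≤ 1) {ρ : ℝ}
    (hρ : 0 < ρ) (x z : EuclideanSpace ℝ (Fin n)) :
    volume.restrict (Icc (-1) 1) {y | |⟪chartVec j y, x⟫ - ⟪chartVec j y, z⟫| ≤ ρ} ≤
      ENNReal.ofReal (2 ^ (n + 1) * (3 * n + 4)) * ENNReal.ofReal ρ ^ τ * edist x z ^ (-τ) := by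
  have hC : (0 : ℝ) < 2 ^ (n + 1) * (3 * n + 4) := by positivity
  rcases eq_or_ne x z with rfl | hxz
  · rw [edist_self, ENNReal.zero_rpow_of_neg (by linarith), ENNReal.mul_top]
    · exact le_top
    · exact mul_ne_zero (ENNReal.ofReal_pos.2 hC).ne'
        (ENNReal.rpow_pos (ENNReal.ofReal_pos.2 hρ) ENNReal.ofReal_ne_top).ne'
  · have hx : x - z ≠ 0 := sub_ne_zero.2 hxz
    have hx0 : 0 < ‖x - z‖ := norm_pos_iff.2 hx
    simp_rw [← inner_sub_right]
    rw [edist_dist, dist_eq_norm, ENNReal.ofReal_rpow_of_pos hρ, ENNReal.ofReal_rpow_of_pos hx0,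
      ← ENNReal.ofReal_mul hC.le, ← ENNReal.ofReal_mul (by positivity), mul_assoc,
      Real.rpow_neg hx0.le, ← div_eq_mul_inv, ← Real.div_rpow hρ.le hx0.le]
    have ha : 0 < ρ / ‖x - z‖ := by positivity
    rcases le_total (ρ / ‖x - z‖) 1 with h | h
    · refine (volume_abs_inner_le j hx hρ).trans (ENNReal.ofReal_le_ofReal ?_)
      gcongr
      exact Real.self_le_rpow_of_le_one ha.le h hτ1
    · refine (volume_cube_le j _).trans (ENNReal.ofReal_le_ofReal ?_)
      have h1 := Real.one_le_rpow h hτ.le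
      have h2 : (0 : ℝ) < 2 ^ n := by positivity
      calc (2 : ℝ) ^ n = 2 ^ n * 1 * 1 := by ring
        _ ≤ 2 ^ (n + 1) * (3 * n + 4) * (ρ / ‖x - z‖) ^ τ := by
          gcongr
          · norm_num
          · omega
          · have : (0 : ℝ) ≤ n := by positivity
            linarith

/-! ### The exceptional set of directions -/

/-- The direction `e`, of any length, is good for `A`: all subsets `B` of `A` of positive
`μH[s]`-measure have images under `⟪e, ·⟫` of dimension at least `min s 1`, and of positive Lebesgue
measure if `1 < s`. The dimension bound is expressed by rational exponents so that only countably
many conditions occur. -/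
def LargeImages {n : ℕ} (s : ℝ) (A : Set (EuclideanSpace ℝ (Fin n)))
    (e : EuclideanSpace ℝ (Fin n)) : Prop :=
  ∀ B ⊆ A, 0 < μH[s] B →
    (∀ q : ℚ, 0 < (q : ℝ) → (q : ℝ) < s → (q : ℝ) < 1 →
      ENNReal.ofReal q ≤ dimH ((fun x => ⟪e, x⟫) '' B)) ∧
    (1 < s → 0 < volume ((fun x => ⟪e, x⟫) '' B))

theorem LargeImages.of_smul {n : ℕ} {s : ℝ} {A : Set (EuclideanSpace ℝ (Fin n))}
    {e : EuclideanSpace ℝ (Fin n)} {a : ℝ} (h : LargeImages s A (a • e)) : LargeImages s A e := by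
  intro B hB hB0
  have himg : (fun x => ⟪a • e, x⟫) '' B = (fun t : ℝ => a • t) '' ((fun x => ⟪e, x⟫) '' B) := by
    rw [image_image]
    simp only [real_inner_smul_left, smul_eq_mul]
  obtain ⟨h1, h2⟩ := h B hB hB0
  rw [himg] at h1 h2
  refine ⟨fun q hq0 hqs hq1 => (h1 q hq0 hqs hq1).trans
    ((lipschitzWith_smul a).dimH_image_le _), fun hs => pos_of_ne_zero fun h0 => ?_⟩
  have := (h2 hs).ne'
  rw [image_smul, Measure.addHaar_smul, h0, mul_zero] at this
  exact this rfl

/-- A bad unit vector `e` is, up to sign, the normalization of a bad chart point `chartVec j y` with `y`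
in the cube, where `j` is an index maximizing `|e j|`. Bad chart points are Lebesgue-null, and
Lipschitz images of them are `μH[n - 1]`-null. -/
theorem hausdorffMeasure_not_largeImages {n : ℕ} {s : ℝ} (hs : 0 < s)
    {A : Set (EuclideanSpace ℝ (Fin n))} (hA : MeasurableSet A) (hA1 : μH[s] A < ∞) :
    (μH[(n : ℝ) - 1] : Measure (EuclideanSpace ℝ (Fin n)))
      {e | e ∈ sphere 0 1 ∧ ¬ LargeImages s A e} = 0 := by
  set F : ∀ j : Fin n, Set ({i : Fin n // i ≠ j} → ℝ) :=
    fun j => {y | ¬ LargeImages s A (chartVec j y)} ∩ Icc (-1) 1 with hF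
  have hF0 : ∀ j, (μH[(n : ℝ) - 1] : Measure ({i : Fin n // i ≠ j} → ℝ)) (F j) = 0 := by
    intro j
    have hL : Continuous (Function.uncurry fun (y : {i : Fin n // i ≠ j} → ℝ)
        (x : EuclideanSpace ℝ (Fin n)) => ⟪chartVec j y, x⟫) := by
      obtain ⟨K, hK⟩ := lipschitzWith_chartVec j
      exact (hK.continuous.comp continuous_fst).inner continuous_snd
    have : IsFiniteMeasure ((volume : Measure ({i : Fin n // i ≠ j} → ℝ)).restrict (Icc (-1) 1)) :=
      ⟨(volume_cube_le j _).trans_lt ENNReal.ofReal_lt_top⟩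
    have hae := ae_image_large hs hA hA1 hL (volume.restrict (Icc (-1) 1))
      (C := ENNReal.ofReal (2 ^ (n + 1) * (3 * n + 4))) ENNReal.ofReal_ne_top
      (fun τ hτ hτ1 ρ hρ x z => volume_abs_inner_sub_le j hτ hτ1 hρ x z)
    have hcard : (n : ℝ) - 1 = (Fintype.card {i : Fin n // i ≠ j} : ℝ) := by
      have h1 : Fintype.card {i : Fin n // i ≠ j} = n - 1 := by
        simp [Fintype.card_subtype_compl]
      rw [h1, Nat.cast_pred (Fin.pos j)]
    rw [hcard, hausdorffMeasure_pi_real]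
    have h2 := ae_iff.1 hae
    rwa [Measure.restrict_apply' measurableSet_Icc] at h2
  have hn1 : ∀ _ : Fin n, 0 ≤ (n : ℝ) - 1 := fun j => by
    have : (1 : ℝ) ≤ n := by exact_mod_cast (Fin.pos j)
    linarith
  set f : ∀ j : Fin n, ({i : Fin n // i ≠ j} → ℝ) → EuclideanSpace ℝ (Fin n) :=
    fun j y => ‖chartVec j y‖⁻¹ • chartVec j y with hf
  have hnull : ∀ (j : Fin n) (c : ℝ), (μH[(n : ℝ) - 1] : Measure (EuclideanSpace ℝ (Fin n)))
      ((fun y => c • f j y) '' F j) = 0 := by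
    intro j c
    obtain ⟨K, hK⟩ := lipschitzWith_chartVec j
    have h1 : LipschitzWith (2 * K) (f j) := by
      have := lipschitzOnWith_normalize.comp (hK.lipschitzOnWith (s := univ))
        (fun y _ => one_le_norm_chartVec j y)
      exact lipschitzOnWith_univ.1 this
    have h2 := ((lipschitzWith_smul c).comp h1).hausdorffMeasure_image_le (hn1 j) (F j)
    rw [hF0, mul_zero] at h2
    exact le_antisymm h2 zero_le
  refine measure_mono_null (t := ⋃ j : Fin n, ((fun y => (1 : ℝ) • f j y) '' F j) ∪
    ((fun y => (-1 : ℝ) • f j y) '' F j)) ?_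
    (measure_iUnion_null fun j => measure_union_null (hnull j 1) (hnull j (-1)))
  rintro e ⟨he, hbad⟩
  have he1 : ‖e‖ = 1 := by simpa using he
  have hne : Nonempty (Fin n) := by
    by_contra h
    rw [not_nonempty_iff] at h
    have : e = 0 := Subsingleton.elim _ _
    rw [this, norm_zero] at he1
    exact zero_ne_one he1
  obtain ⟨j, hj⟩ := Finite.exists_max fun i => |e i|
  have hj0 : e j ≠ 0 := by
    intro h0
    have : e = 0 := by
      ext i
      have := hj i
      rw [h0, abs_zero] at this
      simpa using this
    rw [this, norm_zero] at he1
    exact zero_ne_one he1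
  set y : {i : Fin n // i ≠ j} → ℝ := fun i => e i / e j with hy
  have hev : e = e j • chartVec j y := by
    ext i
    by_cases hi : i = j
    · subst hi; simp [chartVec]
    · simp [chartVec, hi, hy]; field_simp
  have hyF : y ∈ F j := by
    refine ⟨fun h => hbad ?_, ?_⟩
    · refine LargeImages.of_smul (a := (e j)⁻¹) ?_
      rwa [hev, smul_smul, ← hev, inv_mul_cancel₀ hj0, one_smul]
    · have : ∀ i, |y i| ≤ 1 := fun i => by
        rw [hy, abs_div, div_le_one (abs_pos.2 hj0)]
        exact hj i
      exact ⟨fun i => (abs_le.1 (this i)).1, fun i => (abs_le.1 (this i)).2⟩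
  have hnorm : |e j| * ‖chartVec j y‖ = 1 := by
    rw [← he1, ← Real.norm_eq_abs, ← norm_smul, ← hev]
  have hfy : ‖chartVec j y‖⁻¹ = |e j| := by
    rw [inv_eq_iff_eq_inv, eq_inv_of_mul_eq_one_right hnorm]
  refine mem_iUnion.2 ⟨j, ?_⟩
  rcases lt_or_gt_of_ne hj0 with hneg | hpos
  · refine Or.inr ⟨y, hyF, ?_⟩
    simp only [hf]
    rw [hfy, abs_of_neg hneg, smul_smul, neg_one_mul, neg_neg, ← hev]
  · refine Or.inl ⟨y, hyF, ?_⟩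
    simp only [hf]
    rw [hfy, abs_of_pos hpos, one_smul, ← hev]

/-- Marstrand / Falconer–Mattila: if `A ⊆ ℝⁿ` is a Borel set with
`0 < H^s(A) < ∞`, then there is a Borel null set `E` of directions such that for
every unit vector `e ∉ E` and every Borel subset `B ⊆ A` with `H^s(B) > 0`:
if `s ≤ 1` then `dim P_e(B) = s`, and if `s > 1` then `L¹(P_e(B)) > 0`. -/
theorem projections_of_subsets (n : ℕ) (hn : 2 ≤ n) (s : ℝ)
    (hs0 : 0 < s) (hsn : s ≤ n)
    (A : Set (EuclideanSpace ℝ (Fin n))) (hA : MeasurableSet A)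
    (hA0 : 0 < μH[s] A) (hA1 : μH[s] A < ∞) :
    ∃ E : Set (EuclideanSpace ℝ (Fin n)), MeasurableSet E ∧ E ⊆ sphere 0 1 ∧
      (μH[(n : ℝ) - 1] :
        Measure (EuclideanSpace ℝ (Fin n))).restrict (sphere 0 1) E = 0 ∧
      ∀ e ∈ sphere (0 : EuclideanSpace ℝ (Fin n)) 1 \ E,
        ∀ B ⊆ A, MeasurableSet B → 0 < μH[s] B →
          (s ≤ 1 → dimH ((fun x => ⟪e, x⟫) '' B) = ENNReal.ofReal s) ∧
          (1 < s → 0 < volume ((fun x => ⟪e, x⟫) '' B)) := by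
  set Bad : Set (EuclideanSpace ℝ (Fin n)) := {e | e ∈ sphere 0 1 ∧ ¬ LargeImages s A e} with hBad
  set ν : Measure (EuclideanSpace ℝ (Fin n)) := μH[(n : ℝ) - 1] with hν
  have hnull : ν Bad = 0 := hausdorffMeasure_not_largeImages hs0 hA hA1
  have hmeas : MeasurableSet (toMeasurable ν Bad ∩ sphere 0 1) :=
    (measurableSet_toMeasurable _ _).inter isClosed_sphere.measurableSet
  refine ⟨toMeasurable ν Bad ∩ sphere 0 1, hmeas, inter_subset_right, ?_, ?_⟩
  · rw [Measure.restrict_apply hmeas]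
    refine measure_mono_null (inter_subset_left.trans inter_subset_left) ?_
    rw [measure_toMeasurable, hnull]
  · rintro e ⟨he, heE⟩ B hBA - hB0
    have hgood : LargeImages s A e := by
      by_contra h
      exact heE ⟨subset_toMeasurable ν Bad ⟨he, h⟩, he⟩
    obtain ⟨h1, h2⟩ := hgood B hBA hB0
    refine ⟨fun hs1 => le_antisymm ?_ ?_, h2⟩
    · have hlip : LipschitzWith ‖innerSL ℝ e‖₊ fun x : EuclideanSpace ℝ (Fin n) => ⟪e, x⟫ :=
        (innerSL ℝ e).lipschitz
      refine (hlip.dimH_image_le B).trans (dimH_le_of_hausdorffMeasure_ne_top ?_)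
      rw [Real.coe_toNNReal _ hs0.le]
      exact ((measure_mono hBA).trans_lt hA1).ne
    · by_contra! hlt
      obtain ⟨q, -, hq1, hq2⟩ := ENNReal.lt_iff_exists_rat_btwn.1 hlt
      have hq0 : 0 < (q : ℝ) := ENNReal.ofReal_pos.1 (bot_lt_of_lt hq1)
      have hqs : (q : ℝ) < s := (ENNReal.ofReal_lt_ofReal_iff hs0).1 hq2
      exact absurd (h1 q hq0 hqs (hqs.trans_le hs1)) (not_le.2 hq1)
end

section
/- Let n ≥ 2 and let A, B ⊂ ℝⁿ be Borel sets with dim A > 1 and dim B > 1. Then σ({e ∈ S^{n-1} : L^1(P_e(A) ∩ P_e(B)) > 0}) > 0. -/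
open MeasureTheory Metric
open scoped ENNReal RealInnerProductSpace

/-!
The sets `A` and `B` carry compactly supported probability measures `μ` and `ν` with bounded
potentials `∫ |x - y|⁻¹ dμ(y)` (`ProjInt.exists_measure_potential_le`). These come from Frostman's
lemma `ProjInt.frostman`, which holds for Borel sets because the dyadic Hausdorff content is
continuous along increasing unions (`ProjInt.content_iUnion_le`) and therefore capacitable: a Borel
set is a continuous image of Baire space, and this image can be cut down to a compact set that still
carries a Frostman measure.

Let `f_e` and `g_e` be the densities of the projections of `μ` and `ν` to the line in direction `e`.
For a.e. `e` they exist and are square integrable, with `L²` norms that are controlled on average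
over `e` (`ProjInt.exists_energy`). On the other hand the integral of `∫ f_e g_e` over the directions
is comparable with `∬ |x - y|⁻¹ dμ dν > 0`. So `f_e g_e` is not a.e. zero for a set of directions of
positive measure, and for these the projections of the supports meet in a set of positive length
(`ProjInt.volume_directions_ne_zero`). Only a discretized form of `∫ f_e g_e` at scale `2⁻ᵏ` is used,
and the passage to the limit is `ProjInt.tendsto_lintegral_avg`.

Directions are averaged over the unit cube of `ℝⁿ` with Lebesgue measure, which makes the
volumes of the slabs `{e | |e · z| ≤ δ}` elementary. The set of good directions is a cone, and
`ProjInt.hausdorffMeasure_sphere_ne_zero` transfers its positive volume to its trace on the sphere.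
-/

namespace ProjInt
open Set Filter Topology

/-! ### Hausdorff content on a tree of cubes, and capacitability -/

section Content

variable {X P : Type*} (d : ℕ → X → P) (w : ℕ → ℝ≥0∞)

/-- The map `d k : X → P` sends a point to the label of the cube of level `k` containing it, so a pair
`(k, q)` stands for the cube `{x | d k x = q}`. `Covers d S E` says that every point of `E` lies in
one of the cubes in the family `S`. -/
def Covers (S : Set (ℕ × P)) (E : Set X) : Prop := ∀ x ∈ E, ∃ k, (k, d k x) ∈ S

/-- Total weight of a family of cubes, a cube of level `k` having weight `w k`. The sum is over
indicator values, so an uncountable family is allowed (and then has weight `∞` when `w > 0`). -/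
noncomputable def weight (S : Set (ℕ × P)) : ℝ≥0∞ :=
  ∑' q : ℕ × P, S.indicator (fun q => w q.1) q

/-- The Hausdorff content of `E`: the infimum of the weights of the families of cubes, of
arbitrary levels, that cover `E`. -/
noncomputable def content (E : Set X) : ℝ≥0∞ :=
  ⨅ (S : Set (ℕ × P)) (_ : Covers d S E), weight w S

/-- The cubes of `T` that are not contained in a cube of `T` of strictly smaller level. For nested
cubes these are the maximal cubes of `T`; they are pairwise disjoint and cover what `T` covers. -/
def maxCubes (T : Set (ℕ × P)) : Set (ℕ × P) :=
  {q ∈ T | ∀ x, d q.1 x = q.2 → ∀ j < q.1, (j, d j x) ∉ T}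

variable {d w}

lemma content_le {S : Set (ℕ × P)} {E : Set X} (h : Covers d S E) : content d w E ≤ weight w S :=
  iInf₂_le S h

lemma Covers.mono {S : Set (ℕ × P)} {E F : Set X} (h : Covers d S F) (hEF : E ⊆ F) :
    Covers d S E := fun x hx => h x (hEF hx)

lemma content_mono {E F : Set X} (h : E ⊆ F) : content d w E ≤ content d w F :=
  le_iInf₂ fun _ hS => content_le (hS.mono h)

lemma exists_cover_lt {E : Set X} {a : ℝ≥0∞} (h : content d w E < a) :
    ∃ S, Covers d S E ∧ weight w S < a := by
  simpa [content, iInf_lt_iff] using h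

lemma Covers.maxCubes (hd : ∀ k l, k ≤ l → ∀ x y, d l x = d l y → d k x = d k y)
    {T : Set (ℕ × P)} {E : Set X} (h : Covers d T E) :
    Covers d (maxCubes d T) E := by
  classical
  intro x hx
  refine ⟨Nat.find (h x hx), Nat.find_spec (h x hx), ?_⟩
  intro y hy j hj
  have := Nat.find_min (h x hx) hj
  rwa [hd j _ hj.le y x hy]

/-- Strong-subadditivity step. The cubes of `maxCubes d T` and of `C` that do not survive in
`maxCubes d (T ∪ C)`, together with those counted twice, still cover `E`, because each point of `E`
lies in a cube of both families and at most one of the two can be the surviving one. -/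
lemma weight_maxCubes_add_le
    {T C : Set (ℕ × P)} {E : Set X} (hTE : Covers d (maxCubes d T) E)
    (hCE : Covers d C E) :
    weight w (maxCubes d (T ∪ C)) + content d w E ≤ weight w (maxCubes d T) + weight w C := by
  classical
  set D := maxCubes d T
  set M := maxCubes d (T ∪ C)
  -- the cubes lost in the passage from `D` and `C` to `M` still cover `E`
  set R : Set (ℕ × P) := (D \ M) ∪ (C \ M) ∪ (D ∩ C) with hR
  have hRE : Covers d R E := by
    intro x hx
    obtain ⟨a, ha⟩ := hTE x hx
    obtain ⟨b, hb⟩ := hCE x hx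
    rcases lt_trichotomy a b with h | h | h
    · exact ⟨b, Or.inl (Or.inr ⟨hb, fun hM => hM.2 x rfl a h (Or.inl ha.1)⟩)⟩
    · subst h
      exact ⟨a, Or.inr ⟨ha, hb⟩⟩
    · exact ⟨a, Or.inl (Or.inl ⟨ha, fun hM => hM.2 x rfl b h (Or.inr hb)⟩)⟩
  calc weight w M + content d w E ≤ weight w M + weight w R := by gcongr; exact content_le hRE
    _ ≤ weight w D + weight w C := by
      unfold weight
      rw [← ENNReal.tsum_add, ← ENNReal.tsum_add]
      refine ENNReal.tsum_le_tsum fun q => ?_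
      have hM : q ∈ M → q ∈ D ∨ q ∈ C := by
        rintro ⟨h1 | h1, h2⟩
        · exact Or.inl ⟨h1, fun x hx j hj h => h2 x hx j hj (Or.inl h)⟩
        · exact Or.inr h1
      by_cases h1 : q ∈ M <;> by_cases h2 : q ∈ D <;> by_cases h3 : q ∈ C <;>
        simp_all [Set.indicator]

/-- The content is continuous along increasing sequences of sets, although it is not a measure.
Near-optimal covers of the `E i` are amalgamated one at a time by `weight_maxCubes_add_le`, at a
total loss of `ε`; Fatou's lemma for the counting measure passes to the limit. -/
lemma content_iUnion_le [Countable P]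
    (hd : ∀ k l, k ≤ l → ∀ x y, d l x = d l y → d k x = d k y)
    {E : ℕ → Set X} (hE : Monotone E) {c : ℝ≥0∞} (hc : ∀ i, content d w (E i) ≤ c) :
    content d w (⋃ i, E i) ≤ c := by
  classical
  rcases eq_or_ne c ∞ with rfl | hct
  · exact le_top
  refine ENNReal.le_of_forall_pos_le_add fun ε hε _ => ?_
  obtain ⟨η, hη, hηs⟩ := ENNReal.exists_pos_sum_of_countable'
    (ENNReal.coe_pos.2 hε).ne' ℕ
  have hfin : ∀ i, content d w (E i) ≠ ∞ := fun i => ne_top_of_le_ne_top hct (hc i)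
  choose C hC hCw using fun i => exists_cover_lt
    (ENNReal.lt_add_right (hfin i) (hη i).ne')
  set U : ℕ → Set (ℕ × P) := fun k => ⋃ i ∈ Finset.range (k + 1), C i with hU
  have hUE : ∀ k, Covers d (U k) (E k) := fun k x hx => by
    obtain ⟨l, hl⟩ := hC k x hx
    exact ⟨l, mem_biUnion (x := k) (by simp) hl⟩
  have hstep : ∀ k, weight w (maxCubes d (U k)) ≤
      content d w (E k) + ∑ i ∈ Finset.range (k + 1), η i := by
    intro k
    induction k with
    | zero =>
      refine le_trans (ENNReal.tsum_le_tsum fun q => ?_) (by simpa [weight] using (hCw 0).le)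
      refine indicator_le_indicator_of_subset (fun q hq => ?_) (fun _ => zero_le) q
      simpa [hU] using hq.1
    | succ k ih =>
      have hUs : U (k + 1) = U k ∪ C (k + 1) := by
        simp only [hU]
        rw [Finset.range_add_one, Finset.set_biUnion_insert, union_comm]
      have h := weight_maxCubes_add_le (w := w) (E := E k)
        ((hUE k).maxCubes hd) ((hC (k + 1)).mono (hE k.le_succ))
      rw [← hUs] at h
      have h2 : weight w (maxCubes d (U (k + 1))) + content d w (E k) ≤
          (content d w (E (k + 1)) + ∑ i ∈ Finset.range (k + 1 + 1), η i)
            + content d w (E k) := by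
        refine h.trans ((add_le_add ih (hCw (k + 1)).le).trans (le_of_eq ?_))
        rw [Finset.sum_range_succ _ (k + 1)]
        ring
      exact (ENNReal.add_le_add_iff_right (hfin k)).1 h2
  have hstep' : ∀ k, weight w (maxCubes d (U k)) ≤ c + ε := fun k =>
    (hstep k).trans (add_le_add (hc k) ((ENNReal.sum_le_tsum _).trans hηs.le))
  have hcov : Covers d (maxCubes d (⋃ i, C i)) (⋃ i, E i) := by
    apply Covers.maxCubes hd
    intro x hx
    obtain ⟨i, hi⟩ := mem_iUnion.1 hx
    obtain ⟨l, hl⟩ := hC i x hi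
    exact ⟨l, mem_iUnion.2 ⟨i, hl⟩⟩
  refine (content_le hcov).trans ?_
  have hpt : ∀ q : ℕ × P, (maxCubes d (⋃ i, C i)).indicator (fun q => w q.1) q ≤
      liminf (fun k => (maxCubes d (U k)).indicator (fun q => w q.1) q) atTop := by
    intro q
    by_cases hq : q ∈ maxCubes d (⋃ i, C i)
    · refine le_liminf_of_le (by isBoundedDefault) ?_
      obtain ⟨i, hi⟩ := mem_iUnion.1 hq.1
      filter_upwards [eventually_ge_atTop i] with k hk
      have : q ∈ maxCubes d (U k) := by
        refine ⟨mem_biUnion (x := i) (by simp; omega) hi, fun x hx j hj h => ?_⟩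
        obtain ⟨i', _, hi'⟩ := mem_iUnion₂.1 h
        exact hq.2 x hx j hj (mem_iUnion.2 ⟨i', hi'⟩)
      simp [hq, this]
    · simp [hq]
  let _ : MeasurableSpace (ℕ × P) := ⊤
  unfold weight
  rw [← lintegral_count]
  refine (lintegral_mono hpt).trans
    ((lintegral_liminf_le fun _ => measurable_from_top).trans ?_)
  refine liminf_le_of_le (by isBoundedDefault) fun b hb => ?_
  obtain ⟨k, hk⟩ := hb.exists
  refine hk.trans ?_
  rw [lintegral_count]
  exact hstep' k

/-- Choquet's capacitability argument: a continuous image of Baire space of content `> c` contains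
the images of the sets `{z | ∀ i < k, z i ≤ n i}`, for a single sequence `n`, still of content `> c`.
The bounds `n i` are chosen successively with `content_iUnion_le`. -/
lemma exists_bounds_content [Countable P]
    (hd : ∀ k l, k ≤ l → ∀ x y, d l x = d l y → d k x = d k y)
    (f : (ℕ → ℕ) → X) {c : ℝ≥0∞} (hc : c < content d w (range f)) :
    ∃ n : ℕ → ℕ, ∀ k, c < content d w (f '' {z | ∀ i < k, z i ≤ n i}) := by
  classical
  have key : ∀ k (g : ℕ → ℕ), ∃ m, c < content d w (f '' {z | ∀ i < k, z i ≤ g i}) →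
      c < content d w (f '' {z | ∀ i < k + 1, z i ≤ Function.update g k m i}) := by
    intro k g
    by_contra! hcon
    have h1 := (hcon 0).1
    have hun : f '' {z | ∀ i < k, z i ≤ g i} ⊆
        ⋃ m, f '' {z | ∀ i < k + 1, z i ≤ Function.update g k m i} := by
      rintro _ ⟨z, hz, rfl⟩
      refine mem_iUnion.2 ⟨z k, z, fun i hi => ?_, rfl⟩
      rcases eq_or_ne i k with rfl | h
      · simp
      · simpa [Function.update_of_ne h] using hz i (by omega)
    have hmono : Monotone fun m => f '' {z | ∀ i < k + 1, z i ≤ Function.update g k m i} := by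
      intro m m' hm
      refine image_mono fun z hz i hi => (hz i hi).trans ?_
      rcases eq_or_ne i k with rfl | h
      · simpa using hm
      · simp [Function.update_of_ne h]
    exact absurd (h1.trans_le ((content_mono hun).trans
      (content_iUnion_le hd hmono fun m => (hcon m).2))) (lt_irrefl _)
  choose M hM using key
  let G : ℕ → ℕ → ℕ := fun k => Nat.rec (fun _ => 0) (fun k g => Function.update g k (M k g)) k
  have hG : ∀ k, G (k + 1) = Function.update (G k) k (M k (G k)) := fun k => rfl
  have hGc : ∀ k, c < content d w (f '' {z | ∀ i < k, z i ≤ G k i}) := by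
    intro k
    induction k with
    | zero => simpa using hc
    | succ k ih => rw [hG]; exact hM k (G k) ih
  have hstab : ∀ k i, i < k → G k i = G (i + 1) i := by
    intro k i hik
    induction k with
    | zero => omega
    | succ k ih =>
      rcases Nat.lt_succ_iff_lt_or_eq.1 hik with h | h
      · rw [hG, Function.update_of_ne h.ne, ih h]
      · rw [h]
  refine ⟨fun i => G (i + 1) i, fun k => ?_⟩
  convert hGc k using 4
  ext z
  exact forall₂_congr fun i hi => by rw [hstab k i hi]

/-- Points of a finite set `R` receive mass one after another, each as much as the constraints
`mass of a cube of level l ≤ w l`, `l ≤ N`, still permit. In the end each point lies in a cube whose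
constraint is an equality. -/
lemma greedy {Z : Type*} [DecidableEq Z] [DecidableEq P] (D : ℕ → Z → P)
    (N : ℕ) (R : Finset Z) :
    ∃ m : Z → ℝ≥0∞, (∀ l ≤ N, ∀ q, ∑ z ∈ R with D l z = q, m z ≤ w l) ∧
      ∀ z ∈ R, ∃ l ≤ N, ∑ z' ∈ R with D l z' = D l z, m z' = w l := by
  induction R using Finset.induction_on with
  | empty => exact ⟨0, by simp, by simp⟩
  | insert a R ha ih =>
    obtain ⟨m, hm1, hm2⟩ := ih
    obtain ⟨l₀, hl₀, hmin⟩ := Finset.exists_min_image (Finset.range (N + 1))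
      (fun l => w l - ∑ z ∈ R with D l z = D l a, m z) ⟨0, by simp⟩
    set t := w l₀ - ∑ z ∈ R with D l₀ z = D l₀ a, m z with ht
    have hsum : ∀ l q, ∑ z ∈ R with D l z = q, Function.update m a t z =
        ∑ z ∈ R with D l z = q, m z := by
      intro l q
      refine Finset.sum_congr rfl fun z hz => ?_
      rw [Function.update_of_ne]
      rintro rfl
      exact ha (Finset.mem_filter.1 hz).1
    have hins : ∀ l q, ∑ z ∈ insert a R with D l z = q, Function.update m a t z =
        (if D l a = q then t else 0) + ∑ z ∈ R with D l z = q, m z := by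
      intro l q
      rw [Finset.filter_insert]
      split_ifs with h
      · rw [Finset.sum_insert (by simp [ha]), hsum]; simp
      · rw [hsum, zero_add]
    have hle : ∀ l ≤ N, ∀ q, ∑ z ∈ insert a R with D l z = q, Function.update m a t z ≤ w l := by
      intro l hl q
      rw [hins]
      split_ifs with h
      · subst h
        calc t + ∑ z ∈ R with D l z = D l a, m z
            ≤ (w l - ∑ z ∈ R with D l z = D l a, m z) + ∑ z ∈ R with D l z = D l a, m z := by
              gcongr
              exact hmin l (by simp; omega)
          _ = w l := tsub_add_cancel_of_le (hm1 l hl _)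
      · rw [zero_add]; exact hm1 l hl q
    have hl₀' : l₀ ≤ N := by simp at hl₀; omega
    refine ⟨Function.update m a t, hle, fun z hz => ?_⟩
    rcases Finset.mem_insert.1 hz with rfl | hz
    · refine ⟨l₀, hl₀', ?_⟩
      rw [hins, if_pos rfl, ht, tsub_add_cancel_of_le (hm1 l₀ hl₀' _)]
    · obtain ⟨l, hl, h⟩ := hm2 z hz
      refine ⟨l, hl, le_antisymm (hle l hl _) ?_⟩
      rw [hins, h]
      exact le_add_self

/-- If every point of `R` lies in a cube of level `≤ N` with mass exactly `w l`, then the largest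
such cubes are pairwise disjoint, so they cover `R` with weight at most the total mass. -/
lemma greedy_cover {Z : Type*} [DecidableEq Z] [DecidableEq P] {D : ℕ → Z → P}
    (hD : ∀ k l, k ≤ l → ∀ x y, D l x = D l y → D k x = D k y) (N : ℕ) (R : Finset Z)
    (m : Z → ℝ≥0∞) (hm : ∀ z ∈ R, ∃ l ≤ N, ∑ z' ∈ R with D l z' = D l z, m z' = w l) :
    ∃ S : Set (ℕ × P), weight w S ≤ ∑ z ∈ R, m z ∧ (∀ z ∈ R, ∃ l ≤ N, (l, D l z) ∈ S) := by
  classical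
  -- the level of the largest tight cube around a point
  have hm' : ∀ z ∈ R, ∃ l, l ≤ N ∧ ∑ z' ∈ R with D l z' = D l z, m z' = w l := hm
  let lv : Z → ℕ := fun z => if h : ∃ l, l ≤ N ∧ ∑ z' ∈ R with D l z' = D l z, m z' = w l
    then Nat.find h else 0
  have hlv : ∀ z ∈ R, lv z ≤ N ∧ ∑ z' ∈ R with D (lv z) z' = D (lv z) z, m z' = w (lv z) := by
    intro z hz
    simp only [lv, dif_pos (hm' z hz)]
    exact Nat.find_spec (hm' z hz)
  have hlv_min : ∀ z ∈ R, ∀ l, l ≤ N → ∑ z' ∈ R with D l z' = D l z, m z' = w l → lv z ≤ l := by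
    intro z hz l h1 h2
    simp only [lv, dif_pos (hm' z hz)]
    exact Nat.find_min' _ ⟨h1, h2⟩
  set S : Finset (ℕ × P) := R.image fun z => (lv z, D (lv z) z) with hS
  have hSw : ∀ q ∈ S, ∑ z ∈ R with D q.1 z = q.2, m z = w q.1 := by
    intro q hq
    obtain ⟨z, hz, rfl⟩ := Finset.mem_image.1 hq
    exact (hlv z hz).2
  refine ⟨S, ?_, fun z hz => ⟨lv z, (hlv z hz).1, Finset.mem_coe.2 (Finset.mem_image_of_mem _ hz)⟩⟩
  have h1 : weight w (S : Set (ℕ × P)) = ∑ q ∈ S, w q.1 := by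
    rw [weight, tsum_eq_sum (s := S) (fun q hq => by simp [hq])]
    exact Finset.sum_congr rfl fun q hq => by simp [hq]
  rw [h1, ← Finset.sum_congr rfl hSw, ← Finset.sum_biUnion]
  · exact Finset.sum_le_sum_of_subset (by
      intro z hz
      obtain ⟨q, _, hq⟩ := Finset.mem_biUnion.1 hz
      exact (Finset.mem_filter.1 hq).1)
  · -- two distinct maximal tight cubes are disjoint
    have aux : ∀ z₁ ∈ R, ∀ z₂ ∈ R, ∀ z, D (lv z₁) z = D (lv z₁) z₁ → D (lv z₂) z = D (lv z₂) z₂ →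
        lv z₁ ≤ lv z₂ → lv z₁ = lv z₂ := by
      intro z₁ h₁ z₂ h₂ z hz₁ hz₂ hle
      refine le_antisymm hle (hlv_min z₂ h₂ _ (hlv z₁ h₁).1 ?_)
      rw [← hD _ _ hle _ _ hz₂, hz₁]
      exact (hlv z₁ h₁).2
    intro q₁ hq₁ q₂ hq₂ hne
    rw [Function.onFun, Finset.disjoint_left]
    intro z hz₁ hz₂
    apply hne
    obtain ⟨z₁, h₁, rfl⟩ := Finset.mem_image.1 (Finset.mem_coe.1 hq₁)
    obtain ⟨z₂, h₂, rfl⟩ := Finset.mem_image.1 (Finset.mem_coe.1 hq₂)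
    have e₁ := (Finset.mem_filter.1 hz₁).2
    have e₂ := (Finset.mem_filter.1 hz₂).2
    simp only at e₁ e₂
    have : lv z₁ = lv z₂ := by
      rcases le_total (lv z₁) (lv z₂) with h | h
      · exact aux z₁ h₁ z₂ h₂ z e₁ e₂ h
      · exact (aux z₂ h₂ z₁ h₁ z e₂ e₁ h).symm
    ext1
    · exact this
    · simp only
      rw [← e₁, ← e₂, this]

/-- An open set containing the compact product `{z | ∀ i, z i ≤ n i}` contains a cylinder obtained
by imposing only finitely many of the bounds. -/
lemma exists_level_of_open (n : ℕ → ℕ) {U : Set (ℕ → ℕ)} (hU : IsOpen U)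
    (h : {z : ℕ → ℕ | ∀ i, z i ≤ n i} ⊆ U) :
    ∃ k, {z : ℕ → ℕ | ∀ i < k, z i ≤ n i} ⊆ U := by
  by_contra! hcon
  simp only [not_subset] at hcon
  choose z hz hzU using hcon
  have hL : IsCompact {z : ℕ → ℕ | ∀ i, z i ≤ n i} := by
    have : {z : ℕ → ℕ | ∀ i, z i ≤ n i} = Set.pi univ fun i => Iic (n i) := by ext; simp [Pi.le_def]
    rw [this]
    exact isCompact_univ_pi fun i => (finite_Iic _).isCompact
  obtain ⟨a, haL, φ, hφ, hlim⟩ := hL.tendsto_subseq (x := fun k i => min (z k i) (n i))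
    (fun k i => min_le_right _ _)
  have hlim' : Tendsto (z ∘ φ) atTop (𝓝 a) := by
    rw [tendsto_pi_nhds] at hlim ⊢
    intro i
    refine (hlim i).congr' ?_
    filter_upwards [eventually_gt_atTop i] with k hk
    exact min_eq_left (hz (φ k) i (hk.trans_le (hφ.id_le k)))
  obtain ⟨k, hk⟩ := (hlim'.eventually (hU.mem_nhds (h haL))).exists
  exact hzU _ hk

end Content

/-! ### Frostman measures on a tree of cubes -/

section Frostman
variable {X P : Type*} {d : ℕ → X → P} {w : ℕ → ℝ≥0∞}

/-- A probability measure on the compact set `{z | ∀ i, z i ≤ n i}` obeying the Frostman bound on all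
cubes of level `≤ N`. The total mass produced by `greedy` is at least `c`, since the associated cubes
cover the image of a whole cylinder, by `exists_level_of_open`. -/
lemma frostman_approx (hd : ∀ k l, k ≤ l → ∀ x y, d l x = d l y → d k x = d k y)
    (hw : ∀ k, w k ≠ ∞) (f : (ℕ → ℕ) → X) (hf : ∀ k q, IsOpen {z | d k (f z) = q})
    {c : ℝ≥0∞} (hc0 : c ≠ 0) (n : ℕ → ℕ)
    (hn : ∀ k, c < content d w (f '' {z | ∀ i < k, z i ≤ n i})) (N : ℕ) :
    ∃ μ : ProbabilityMeasure {z : ℕ → ℕ // ∀ i, z i ≤ n i},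
      ∀ l ≤ N, ∀ q, (μ : Measure {z : ℕ → ℕ // ∀ i, z i ≤ n i}) {z | d l (f z) = q} ≤ c⁻¹ * w l := by
  classical
  have hL : IsCompact {z : ℕ → ℕ | ∀ i, z i ≤ n i} := by
    have : {z : ℕ → ℕ | ∀ i, z i ≤ n i} = Set.pi univ fun i => Iic (n i) := by
      ext; simp [Pi.le_def]
    rw [this]
    exact isCompact_univ_pi fun i => (finite_Iic _).isCompact
  have : CompactSpace {z : ℕ → ℕ // ∀ i, z i ≤ n i} := isCompact_iff_compactSpace.1 hL
  set Z := {z : ℕ → ℕ // ∀ i, z i ≤ n i}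
  set D : ℕ → Z → P := fun l z => d l (f z) with hDdef
  have hDo : ∀ l q, IsOpen {z : Z | D l z = q} := fun l q =>
    (hf l q).preimage continuous_subtype_val
  have hD : ∀ k l, k ≤ l → ∀ x y, D l x = D l y → D k x = D k y :=
    fun k l h x y => hd k l h _ _
  obtain ⟨R, -, hR⟩ := (isCompact_univ (X := Z)).elim_nhds_subcover
    (fun z => {z' | D N z' = D N z}) (fun z _ => (hDo N _).mem_nhds rfl)
  obtain ⟨m, hm1, hm2⟩ := greedy (w := w) D N R
  obtain ⟨S, hSw, hS⟩ := greedy_cover hD N R m hm2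
  set W := ∑ z ∈ R, m z with hW
  have hWtop : W ≠ ∞ := by
    refine ENNReal.sum_ne_top.2 fun z hz => ne_top_of_le_ne_top (hw N) ?_
    refine le_trans ?_ (hm1 N le_rfl (D N z))
    exact Finset.single_le_sum (f := m) (fun _ _ => zero_le) (by simp [hz])
  have hcW : c ≤ W := by
    set U : Set (ℕ → ℕ) := ⋃ q ∈ S, {z | d q.1 (f z) = q.2}
    have hU : IsOpen U := isOpen_biUnion fun q _ => hf _ _
    obtain ⟨k, hk⟩ := exists_level_of_open n hU (by
      intro z hz
      obtain ⟨z', hz'R, hz'⟩ := mem_iUnion₂.1 (hR (mem_univ (⟨z, hz⟩ : Z)))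
      obtain ⟨l, hl, hlS⟩ := hS z' hz'R
      exact mem_iUnion₂.2 ⟨_, hlS, hD l N hl _ _ hz'⟩)
    refine (hn k).le.trans ((content_le ?_).trans hSw)
    rintro _ ⟨z, hz, rfl⟩
    obtain ⟨q, hq, hzq⟩ := mem_iUnion₂.1 (hk hz)
    refine ⟨q.1, ?_⟩
    rw [mem_ofPred_eq] at hzq
    rw [hzq]
    exact hq
  have hW0 : W ≠ 0 := fun h => hc0 (by simpa [h] using hcW)
  set ν : Measure Z := ∑ z ∈ R, m z • Measure.dirac z with hν
  have hν_univ : ν univ = W := by simp [hν, hW]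
  have hνle : ∀ l ≤ N, ∀ q, ν {z | D l z = q} ≤ w l := by
    intro l hl q
    refine le_trans (le_of_eq ?_) (hm1 l hl q)
    rw [hν, Measure.finsetSum_apply, Finset.sum_filter]
    refine Finset.sum_congr rfl fun z _ => ?_
    rw [Measure.smul_apply, Measure.dirac_apply' _ (hDo l q).measurableSet]
    by_cases h : D l z = q <;> simp [h]
  refine ⟨⟨W⁻¹ • ν, ⟨?_⟩⟩, fun l hl q => ?_⟩
  · rw [Measure.smul_apply, hν_univ, smul_eq_mul, ENNReal.inv_mul_cancel hW0 hWtop]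
  · change (W⁻¹ • ν) {z | D l z = q} ≤ _
    rw [Measure.smul_apply, smul_eq_mul]
    gcongr
    exact hνle l hl q

/-- Frostman's lemma for a tree of cubes: a weak limit of the measures of `frostman_approx`. The
cubes are only required to be open after pulling back to Baire space, where the portmanteau theorem
applies to them. -/
theorem frostman_tree [Countable P] [TopologicalSpace X] [T2Space X] [MeasurableSpace X]
    [BorelSpace X]
    (hd : ∀ k l, k ≤ l → ∀ x y, d l x = d l y → d k x = d k y)
    (hdm : ∀ k q, MeasurableSet {x | d k x = q})
    (hw : ∀ k, w k ≠ ∞) (f : (ℕ → ℕ) → X) (hfc : Continuous f)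
    (hf : ∀ k q, IsOpen {z | d k (f z) = q}) (hpos : content d w (range f) ≠ 0) :
    ∃ (K : Set X) (μ : Measure X) (C : ℝ≥0∞), IsCompact K ∧ K ⊆ range f ∧
      IsProbabilityMeasure μ ∧ μ Kᶜ = 0 ∧ C ≠ ∞ ∧ ∀ k q, μ {x | d k x = q} ≤ C * w k := by
  obtain ⟨c, hc0, hc⟩ := exists_between (pos_iff_ne_zero.2 hpos)
  obtain ⟨n, hn⟩ := exists_bounds_content hd f hc
  have hL : IsCompact {z : ℕ → ℕ | ∀ i, z i ≤ n i} := by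
    have : {z : ℕ → ℕ | ∀ i, z i ≤ n i} = Set.pi univ fun i => Iic (n i) := by
      ext; simp [Pi.le_def]
    rw [this]
    exact isCompact_univ_pi fun i => (finite_Iic _).isCompact
  have : CompactSpace {z : ℕ → ℕ // ∀ i, z i ≤ n i} := isCompact_iff_compactSpace.1 hL
  have : HasOuterApproxClosed {z : ℕ → ℕ // ∀ i, z i ≤ n i} := by
    let _ : MetricSpace (ℕ → ℕ) := TopologicalSpace.metrizableSpaceMetric _
    infer_instance
  choose μN hμN using frostman_approx hd hw f hf hc0.ne' n hn
  obtain ⟨μ, -, hμ⟩ := isCompact_univ.ultrafilter_le_nhds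
    ((hyperfilter ℕ).map μN) (by simp)
  have hlim : Tendsto μN (hyperfilter ℕ) (𝓝 μ) := hμ
  set Z := {z : ℕ → ℕ // ∀ i, z i ≤ n i}
  have hfZ : Continuous fun z : Z => f z := hfc.comp continuous_subtype_val
  refine ⟨range fun z : Z => f z, (μ : Measure Z).map fun z : Z => f z, c⁻¹, ?_, ?_, ?_, ?_, ?_, ?_⟩
  · exact isCompact_range hfZ
  · rintro _ ⟨z, rfl⟩; exact ⟨z, rfl⟩
  · exact Measure.isProbabilityMeasure_map hfZ.measurable.aemeasurable
  · rw [Measure.map_apply hfZ.measurable (isCompact_range hfZ).measurableSet.compl]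
    convert measure_empty (μ := (μ : Measure Z))
    ext z; simp
  · exact ENNReal.inv_ne_top.2 hc0.ne'
  · intro k q
    rw [Measure.map_apply hfZ.measurable (hdm k q)]
    refine (ProbabilityMeasure.le_liminf_measure_open_of_tendsto hlim
      ((hf k q).preimage continuous_subtype_val)).trans ?_
    refine liminf_le_of_frequently_le' (Eventually.frequently ?_)
    have : ∀ᶠ N in (hyperfilter ℕ : Filter ℕ), k ≤ N :=
      Nat.hyperfilter_le_atTop (eventually_ge_atTop k)
    filter_upwards [this] with N hN
    exact hμN N k hN q

end Frostman

/-! ### Frostman's lemma for Borel sets in `ℝⁿ` -/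

section Dyadic
variable {ι : Type*}

/-- The label of the half-open dyadic cube of side `2⁻ᵏ` containing `x`. -/
noncomputable def dyadic (k : ℕ) (x : ι → ℝ) : ι → ℤ := fun i => ⌊(2 : ℝ) ^ k * x i⌋

lemma dyadic_nested (k l : ℕ) (hkl : k ≤ l) (x y : ι → ℝ) (h : dyadic l x = dyadic l y) :
    dyadic k x = dyadic k y := by
  have key : ∀ t : ℝ, ⌊(2 : ℝ) ^ k * t⌋ = ⌊(2 : ℝ) ^ l * t⌋ / ((2 ^ (l - k) : ℕ) : ℤ) := by
    intro t
    rw [← Int.floor_div_natCast]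
    congr 1
    obtain ⟨m, rfl⟩ := Nat.exists_eq_add_of_le hkl
    push_cast
    rw [Nat.add_sub_cancel_left, pow_add]
    field_simp
  ext i
  have := congrFun h i
  simp only [dyadic] at this ⊢
  rw [key, key, this]

lemma measurable_dyadic (k : ℕ) : Measurable (dyadic k : (ι → ℝ) → ι → ℤ) := by
  refine measurable_pi_lambda _ fun i => ?_
  exact Int.measurable_floor.comp ((measurable_pi_apply i).const_mul _)

variable [Fintype ι]

lemma ediam_dyadic_le (k : ℕ) (q : ι → ℤ) :
    ediam {x : ι → ℝ | dyadic k x = q} ≤ ((2 : ℝ≥0∞) ^ k)⁻¹ := by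
  refine ediam_le fun x hx y hy => ?_
  rw [edist_pi_le_iff]
  intro i
  have hxy : ⌊(2 : ℝ) ^ k * x i⌋ = ⌊(2 : ℝ) ^ k * y i⌋ := congrFun (hx.trans hy.symm) i
  have h := Int.abs_sub_lt_one_of_floor_eq_floor hxy
  rw [← mul_sub, abs_mul, abs_of_pos (by positivity : (0 : ℝ) < 2 ^ k)] at h
  have h' : dist (x i) (y i) ≤ ((2 : ℝ) ^ k)⁻¹ := by
    rw [Real.dist_eq, ← one_div, le_div_iff₀ (by positivity)]
    linarith
  rw [edist_dist]
  refine (ENNReal.ofReal_le_ofReal h').trans (le_of_eq ?_)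
  rw [ENNReal.ofReal_inv_of_pos (by positivity), ENNReal.ofReal_pow (by norm_num)]
  simp

/-- A set of dimension `> s` has positive `s`-dimensional dyadic content: covers of weight tending
to `0` can use only small cubes, so they would bound its `s`-dimensional Hausdorff measure. -/
lemma content_dyadic_ne_zero {s : NNReal} (hs : 0 < s) {A : Set (ι → ℝ)} (hA : (s : ℝ≥0∞) < dimH A) :
    content (dyadic : ℕ → (ι → ℝ) → ι → ℤ) (fun k => (((2 : ℝ≥0∞) ^ k)⁻¹) ^ (s : ℝ)) A ≠ 0 := by
  intro h0
  set w : ℕ → ℝ≥0∞ := fun k => (((2 : ℝ≥0∞) ^ k)⁻¹) ^ (s : ℝ) with hw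
  have hs' : (0 : ℝ) < s := hs
  have hwpos : ∀ N, 0 < w N := fun N =>
    ENNReal.rpow_pos (ENNReal.inv_pos.2 (by finiteness)) (ENNReal.inv_ne_top.2 (by positivity))
  have hr : Tendsto (fun N : ℕ => ((2 : ℝ≥0∞) ^ N)⁻¹) atTop (𝓝 0) := by
    simp_rw [ENNReal.inv_pow]
    exact ENNReal.tendsto_pow_atTop_nhds_zero_of_lt_one (by simp)
  have hwlim : Tendsto w atTop (𝓝 0) := by
    have := hr.ennrpow_const (s : ℝ)
    rwa [ENNReal.zero_rpow_of_pos hs'] at this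
  choose S hS hSw using fun N => exists_cover_lt (d := dyadic) (w := w) (E := A)
    (a := w N) (by rw [h0]; exact hwpos N)
  have hlev : ∀ N, ∀ q ∈ S N, N ≤ q.1 := by
    intro N q hq
    by_contra! hlt
    have h1 : w q.1 ≤ weight w (S N) := by
      have := ENNReal.le_tsum (f := (S N).indicator (fun q : ℕ × (ι → ℤ) => w q.1)) q
      rwa [indicator_of_mem hq] at this
    have h2 : w N ≤ w q.1 := by
      simp only [hw]
      gcongr
      norm_num
    exact absurd (h2.trans h1) (not_le.2 (hSw N))
  have hle := Measure.hausdorffMeasure_le_liminf_tsum (s : ℝ) A (l := atTop)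
    (ι := fun N => S N) (fun N : ℕ => ((2 : ℝ≥0∞) ^ N)⁻¹) hr
    (fun N q => {x : ι → ℝ | dyadic q.1.1 x = q.1.2})
    (Eventually.of_forall fun N q => (ediam_dyadic_le _ _).trans (by
      have := hlev N q.1 q.2
      gcongr
      norm_num))
    (Eventually.of_forall fun N x hx => by
      obtain ⟨k, hk⟩ := hS N x hx
      exact mem_iUnion.2 ⟨⟨_, hk⟩, rfl⟩)
  rw [hausdorffMeasure_of_lt_dimH hA] at hle
  have hzero : liminf (fun N => ∑' q : S N,
      ediam {x : ι → ℝ | dyadic q.1.1 x = q.1.2} ^ (s : ℝ)) atTop ≤ 0 := by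
    rw [← hwlim.liminf_eq]
    refine liminf_le_liminf (Eventually.of_forall fun N => ?_)
    refine le_trans ?_ (hSw N).le
    rw [weight, ← tsum_subtype (S N) (fun q : ℕ × (ι → ℤ) => w q.1)]
    refine ENNReal.tsum_le_tsum fun q => ?_
    simp only [hw]
    gcongr
    exact ediam_dyadic_le _ _
  exact absurd (hle.trans hzero) (by simp)

/-- **Frostman's lemma**: a Borel set of dimension `> s` carries a probability measure, supported on
a compact subset, whose mass on a dyadic cube of side `2⁻ᵏ` is at most a constant times `2⁻ᵏˢ`. -/
theorem frostman {s : NNReal} (hs : 0 < s) {A : Set (ι → ℝ)} (hA : MeasurableSet A)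
    (hdim : (s : ℝ≥0∞) < dimH A) :
    ∃ (K : Set (ι → ℝ)) (μ : Measure (ι → ℝ)) (C : ℝ≥0∞), IsCompact K ∧ K ⊆ A ∧
      IsProbabilityMeasure μ ∧ μ Kᶜ = 0 ∧ C ≠ ∞ ∧
      ∀ k q, μ {x | dyadic k x = q} ≤ C * (((2 : ℝ≥0∞) ^ k)⁻¹) ^ (s : ℝ) := by
  have hJ : Measurable fun (x : ι → ℝ) (k : ℕ) => dyadic k x :=
    measurable_pi_lambda _ fun k => measurable_dyadic k
  have hpos := content_dyadic_ne_zero hs hdim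
  -- in a finer Polish topology the dyadic cubes are clopen, and `A` is still analytic there
  have hpar : A = ∅ ∨ ∃ f : (ℕ → ℕ) → (ι → ℝ), Continuous f ∧
      Continuous (fun z k => dyadic k (f z)) ∧ range f = A := by
    have hp₀ : PolishSpace (ι → ℝ) := inferInstance
    have hb₀ : BorelSpace (ι → ℝ) := inferInstance
    obtain ⟨t', ht', hJc, hpol⟩ := hJ.exists_continuous
    have hbor : @BorelSpace (ι → ℝ) t' _ := by
      refine @BorelSpace.mk _ t' _ ?_
      rw [borel_eq_borel_of_le hpol hp₀ ht']
      exact hb₀.measurable_eq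
    have han := @MeasurableSet.analyticSet _ t' hpol _ hbor A hA
    rw [AnalyticSet] at han
    rcases han with h | ⟨f, hfc, hfA⟩
    · exact Or.inl h
    · exact Or.inr ⟨f, continuous_le_rng ht' hfc, @Continuous.comp _ _ _ _ t' _ _ _ hJc hfc, hfA⟩
  rcases hpar with rfl | ⟨f, hfc, hJf, rfl⟩
  · simp [dimH_empty] at hdim
  refine frostman_tree dyadic_nested (fun k q => measurable_dyadic k (measurableSet_singleton q))
    (fun k => ?_) f hfc (fun k q => ?_) hpos
  · have : ((2 : ℝ≥0∞) ^ k)⁻¹ ≠ ∞ := ENNReal.inv_ne_top.2 (by positivity)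
    finiteness
  · exact (isOpen_discrete {q}).preimage ((continuous_apply k).comp hJf)

end Dyadic

/-! ### Potentials of Frostman measures -/

section Energy
variable {ι : Type*} [Fintype ι]

/-- A ball of radius `2⁻ᵏ` in the sup norm meets at most `3ⁿ` dyadic cubes of side `2⁻ᵏ`. -/
lemma measure_closedEBall_le {μ : Measure (ι → ℝ)} {B : ℝ≥0∞} {k : ℕ}
    (hμ : ∀ q, μ {x | dyadic k x = q} ≤ B) (x : ι → ℝ) :
    μ {y | edist x y ≤ ((2 : ℝ≥0∞) ^ k)⁻¹} ≤ 3 ^ Fintype.card ι * B := by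
  classical
  set T : Finset (ι → ℤ) := Fintype.piFinset fun i => Finset.Icc (dyadic k x i - 1) (dyadic k x i + 1)
  have hT : T.card = 3 ^ Fintype.card ι := by
    simp only [T, Fintype.card_piFinset, Int.card_Icc]
    have : ∀ i, (dyadic k x i + 1 + 1 - (dyadic k x i - 1)).toNat = 3 := fun i => by
      have : dyadic k x i + 1 + 1 - (dyadic k x i - 1) = 3 := by ring
      rw [this]; rfl
    simp [this]
  have hsub : {y | edist x y ≤ ((2 : ℝ≥0∞) ^ k)⁻¹} ⊆ ⋃ q ∈ T, {y | dyadic k y = q} := by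
    intro y hy
    refine mem_iUnion₂.2 ⟨dyadic k y, ?_, rfl⟩
    rw [Fintype.mem_piFinset]
    intro i
    have h1 : edist (x i) (y i) ≤ ((2 : ℝ≥0∞) ^ k)⁻¹ := (edist_le_pi_edist x y i).trans hy
    have h2 : |x i - y i| ≤ ((2 : ℝ) ^ k)⁻¹ := by
      rw [← Real.dist_eq, ← edist_le_ofReal (by positivity)]
      refine h1.trans (le_of_eq ?_)
      rw [ENNReal.ofReal_inv_of_pos (by positivity), ENNReal.ofReal_pow (by norm_num)]
      simp
    have h3 : |2 ^ k * x i - 2 ^ k * y i| ≤ 1 := by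
      rw [← mul_sub, abs_mul, abs_of_pos (by positivity : (0 : ℝ) < 2 ^ k)]
      calc (2 : ℝ) ^ k * |x i - y i| ≤ 2 ^ k * (2 ^ k)⁻¹ := by gcongr
        _ = 1 := mul_inv_cancel₀ (by positivity)
    obtain ⟨h4, h5⟩ := abs_le.1 h3
    simp only [dyadic, Finset.mem_Icc]
    constructor
    · rw [Int.le_floor]
      push_cast
      linarith [Int.floor_le (2 ^ k * x i)]
    · rw [← Int.lt_add_one_iff, Int.floor_lt]
      push_cast
      linarith [Int.lt_floor_add_one (2 ^ k * x i)]
  calc μ {y | edist x y ≤ ((2 : ℝ≥0∞) ^ k)⁻¹} ≤ μ (⋃ q ∈ T, {y | dyadic k y = q}) := measure_mono hsub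
    _ ≤ ∑ q ∈ T, μ {y | dyadic k y = q} := measure_biUnion_finset_le _ _
    _ ≤ ∑ q ∈ T, B := Finset.sum_le_sum fun q _ => hμ q
    _ = 3 ^ Fintype.card ι * B := by simp [hT]

lemma inv_le_dyadic_sum (t : ℝ≥0∞) :
    t⁻¹ ≤ 1 + ∑' k : ℕ, 2 ^ (k + 1) * (if t ≤ ((2 : ℝ≥0∞) ^ k)⁻¹ then 1 else 0) := by
  classical
  rcases eq_or_ne t 0 with rfl | ht0
  · have : ∑' k : ℕ, (2 : ℝ≥0∞) ^ (k + 1) * (if (0 : ℝ≥0∞) ≤ ((2 : ℝ≥0∞) ^ k)⁻¹ then 1 else 0) = ∞ := by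
      refine top_le_iff.1 ?_
      rw [← ENNReal.tsum_const_eq_top_of_ne_zero (α := ℕ) one_ne_zero]
      refine ENNReal.tsum_le_tsum fun k => ?_
      simp only [zero_le, if_true, mul_one]
      exact one_le_pow₀ (by norm_num)
    rw [this]; simp
  rcases lt_or_ge 1 t with h1 | h1
  · refine le_trans ?_ le_self_add
    exact ENNReal.inv_le_one.2 h1.le
  have hex : ∃ k : ℕ, ((2 : ℝ≥0∞) ^ (k + 1))⁻¹ < t := by
    have hr : Tendsto (fun N : ℕ => ((2 : ℝ≥0∞) ^ N)⁻¹) atTop (𝓝 0) := by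
      simp_rw [ENNReal.inv_pow]
      exact ENNReal.tendsto_pow_atTop_nhds_zero_of_lt_one (by simp)
    exact ((hr.comp (tendsto_add_atTop_nat 1)).eventually_lt_const (pos_iff_ne_zero.2 ht0)).exists
  have hk : t ≤ ((2 : ℝ≥0∞) ^ Nat.find hex)⁻¹ := by
    rcases Nat.eq_zero_or_pos (Nat.find hex) with h | h
    · rw [h]; simpa using h1
    · obtain ⟨j, hj⟩ := Nat.exists_eq_succ_of_ne_zero h.ne'
      have := Nat.find_min hex (m := j) (by omega)
      rw [hj]
      exact not_lt.1 this
  refine le_trans ?_ le_add_self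
  refine le_trans ?_ (ENNReal.le_tsum (Nat.find hex))
  rw [if_pos hk, mul_one]
  exact ENNReal.inv_le_iff_inv_le.1 (Nat.find_spec hex).le

/-- A Borel set of dimension `> 1` carries a probability measure, supported on a compact subset, with
bounded potential `∫ |x - y|⁻¹ dμ(y)`. Here `edist` is the sup-norm distance, and `0⁻¹ = ∞`. -/
theorem exists_measure_potential_le {A : Set (ι → ℝ)} (hA : MeasurableSet A) (hdim : 1 < dimH A) :
    ∃ (K : Set (ι → ℝ)) (μ : Measure (ι → ℝ)) (C : ℝ≥0∞), IsCompact K ∧ K ⊆ A ∧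
      IsProbabilityMeasure μ ∧ μ Kᶜ = 0 ∧ C ≠ ∞ ∧ ∀ x, ∫⁻ y, (edist x y)⁻¹ ∂μ ≤ C := by
  obtain ⟨s, hs1, hs⟩ := ENNReal.lt_iff_exists_nnreal_btwn.1 hdim
  have hs1' : (1 : ℝ) < s := by exact_mod_cast hs1
  obtain ⟨K, μ, C, hK, hKA, hμ, hμK, hC, hμC⟩ := frostman
    (by exact_mod_cast zero_lt_one.trans hs1) hA hs
  set r : ℝ≥0∞ := 2 * (2⁻¹ : ℝ≥0∞) ^ (s : ℝ) with hr
  have hr1 : r < 1 := by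
    have h : (2⁻¹ : ℝ≥0∞) ^ (s : ℝ) < 2⁻¹ := by
      have := ENNReal.rpow_lt_rpow_of_exponent_gt (x := (2⁻¹ : ℝ≥0∞)) (by simp) (by simp) hs1'
      simpa using this
    calc r < 2 * 2⁻¹ := by
          rw [hr]; exact (ENNReal.mul_lt_mul_iff_right (by simp) (by simp)).2 h
      _ = 1 := ENNReal.mul_inv_cancel (by simp) (by simp)
  refine ⟨K, μ, 1 + 2 * 3 ^ Fintype.card ι * C * (1 - r)⁻¹, hK, hKA, hμ, hμK, ?_, fun x => ?_⟩
  · have : (1 - r)⁻¹ ≠ ∞ := ENNReal.inv_ne_top.2 (tsub_pos_of_lt hr1).ne'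
    finiteness
  · have hmeas : ∀ k : ℕ, MeasurableSet {y | edist x y ≤ ((2 : ℝ≥0∞) ^ k)⁻¹} := fun k =>
      measurableSet_le (by fun_prop) measurable_const
    calc ∫⁻ y, (edist x y)⁻¹ ∂μ
        ≤ ∫⁻ y, 1 + ∑' k : ℕ, 2 ^ (k + 1) *
            ({y | edist x y ≤ ((2 : ℝ≥0∞) ^ k)⁻¹}.indicator 1 y) ∂μ := by
          refine lintegral_mono fun y => (inv_le_dyadic_sum _).trans (le_of_eq ?_)
          simp [indicator_apply]
      _ = 1 + ∑' k : ℕ, 2 ^ (k + 1) * μ {y | edist x y ≤ ((2 : ℝ≥0∞) ^ k)⁻¹} := by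
          rw [lintegral_add_left measurable_const, lintegral_tsum]
          · simp only [lintegral_const, measure_univ, mul_one]
            congr 2; ext k
            rw [lintegral_const_mul _ (measurable_one.indicator (hmeas k)),
              lintegral_indicator_one (hmeas k)]
          · exact fun k => ((measurable_one.indicator (hmeas k)).const_mul _).aemeasurable
      _ ≤ 1 + ∑' k : ℕ, (2 * 3 ^ Fintype.card ι * C) * r ^ k := by
          refine add_le_add le_rfl (ENNReal.tsum_le_tsum fun k => ?_)
          calc (2 : ℝ≥0∞) ^ (k + 1) * μ {y | edist x y ≤ ((2 : ℝ≥0∞) ^ k)⁻¹}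
              ≤ 2 ^ (k + 1) * (3 ^ Fintype.card ι * (C * (((2 : ℝ≥0∞) ^ k)⁻¹) ^ (s : ℝ))) := by
                gcongr
                exact measure_closedEBall_le (hμC k) x
            _ = (2 * 3 ^ Fintype.card ι * C) * r ^ k := by
                have : (((2 : ℝ≥0∞) ^ k)⁻¹) ^ (s : ℝ) = ((2⁻¹ : ℝ≥0∞) ^ (s : ℝ)) ^ k := by
                  rw [ENNReal.inv_pow, ← ENNReal.rpow_natCast, ← ENNReal.rpow_natCast,
                    ← ENNReal.rpow_mul, ← ENNReal.rpow_mul, mul_comm]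
                rw [this, hr, mul_pow]
                ring
      _ = _ := by rw [ENNReal.tsum_mul_left, ENNReal.tsum_geometric]

end Energy

/-! ### Volume of slabs of directions -/

section Directions
variable {ι : Type*} [Fintype ι]

lemma exists_abs_eq_norm {z : ι → ℝ} (hz : z ≠ 0) : ∃ i, |z i| = ‖z‖ := by
  obtain ⟨i₀, -⟩ := Function.ne_iff.1 hz
  obtain ⟨i, -, hi⟩ := Finset.exists_max_image Finset.univ (fun i => |z i|) ⟨i₀, by simp⟩
  refine ⟨i, le_antisymm (norm_le_pi_norm z i) ?_⟩
  exact (pi_norm_le_iff_of_nonneg (abs_nonneg _)).2 fun j => hi j (Finset.mem_univ j)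

/-- The linear map replacing the coordinate `e i` by `e ⬝ᵥ z` has determinant `z i` and carries this
set onto a box. -/
lemma volume_slab_box [DecidableEq ι] {z : ι → ℝ} {i : ι} (hi : z i ≠ 0) {r δ : ℝ} (hr : 0 ≤ r)
    (hδ : 0 ≤ δ) :
    volume {e : ι → ℝ | (∀ j ≠ i, |e j| ≤ r) ∧ |e ⬝ᵥ z| ≤ r * δ} =
      ENNReal.ofReal ((2 * r) ^ Fintype.card ι * δ / |z i|) := by
  set M : Matrix ι ι ℝ := (1 : Matrix ι ι ℝ).updateRow i z with hM
  have hdet : LinearMap.det (Matrix.toLin' M) = z i := by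
    rw [LinearMap.det_toLin', hM]
    have h := Matrix.det_updateRow_sum (1 : Matrix ι ι ℝ) i z
    have hz : ∑ k, z k • (1 : Matrix ι ι ℝ) k = z := by
      ext j
      simp [Finset.sum_apply, Matrix.one_apply]
    rwa [hz, Matrix.det_one, smul_eq_mul, mul_one] at h
  set b : ι → ℝ := Function.update (fun _ => r) i (r * δ) with hb
  have hset : {e : ι → ℝ | (∀ j ≠ i, |e j| ≤ r) ∧ |e ⬝ᵥ z| ≤ r * δ} =
      Matrix.toLin' M ⁻¹' (Icc (-b) b) := by
    ext e
    have hMe : ∀ j, Matrix.toLin' M e j = if j = i then e ⬝ᵥ z else e j := by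
      intro j
      rw [Matrix.toLin'_apply, hM]
      split_ifs with h
      · subst h
        simp [Matrix.mulVec, dotProduct_comm]
      · simp [Matrix.mulVec, Matrix.updateRow_ne h, dotProduct, Matrix.one_apply]
    simp only [mem_preimage, mem_Icc, Pi.le_def, ← forall_and, hMe, Pi.neg_apply, ← abs_le]
    constructor
    · rintro ⟨h1, h2⟩ j
      by_cases h : j = i
      · simp [h, hb, h2]
      · simp [h, hb, h1]
    · intro h
      refine ⟨fun j hj => by simpa [hj, hb] using h j, by simpa [hb] using h i⟩
  rw [hset, Measure.addHaar_preimage_linearMap _ (by rwa [hdet]), hdet, Real.volume_Icc_pi,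
    ← ENNReal.ofReal_prod_of_nonneg, ← ENNReal.ofReal_mul (by positivity)]
  · congr 1
    have : ∏ j, (b j - (-b) j) = (2 * r) ^ Fintype.card ι * δ := by
      have h1 : ∀ j, b j - (-b) j = 2 * b j := fun j => by simp; ring
      simp only [h1]
      rw [Finset.prod_mul_distrib, hb, Finset.prod_update_of_mem (Finset.mem_univ i)]
      simp only [Finset.prod_const]
      have h2 : Fintype.card ι = (Finset.univ \ {i}).card + 1 := by
        rw [← Finset.card_univ, Finset.card_sdiff_of_subset (by simp)]
        have : 0 < (Finset.univ : Finset ι).card := Finset.card_pos.2 ⟨i, by simp⟩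
        simp only [Finset.card_singleton]; omega
      rw [Finset.card_univ, mul_pow]
      conv_lhs => rw [h2]
      conv_rhs => rw [h2]
      ring
    rw [this, abs_inv]; ring
  · intro j _
    by_cases h : j = i
    · subst h; simp [hb]; positivity
    · simp [hb, h, hr]

/-- The directions in the cube `‖e‖ ≤ 1` nearly orthogonal to `z` have volume `≲ δ / ‖z‖`. -/
lemma volume_slab_le {z : ι → ℝ} (hz : z ≠ 0) {δ : ℝ} (hδ : 0 ≤ δ) :
    volume {e : ι → ℝ | ‖e‖ ≤ 1 ∧ |e ⬝ᵥ z| ≤ δ} ≤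
      ENNReal.ofReal (2 ^ Fintype.card ι * δ / ‖z‖) := by
  classical
  obtain ⟨i, hi⟩ := exists_abs_eq_norm hz
  have hzi : z i ≠ 0 := by rw [← abs_pos, hi]; exact norm_pos_iff.2 hz
  have := volume_slab_box hzi zero_le_one hδ
  rw [hi] at this
  simp only [mul_one, one_mul] at this
  rw [← this]
  exact measure_mono fun e he => ⟨fun j _ => (norm_le_pi_norm e j).trans he.1, he.2⟩

/-- The bound of `volume_slab_le` is sharp up to the constant. -/
lemma le_volume_slab {z : ι → ℝ} (hz : z ≠ 0) {δ : ℝ} (hδ : 0 ≤ δ) (hδz : δ ≤ ‖z‖) :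
    ENNReal.ofReal ((2 / Fintype.card ι) ^ Fintype.card ι * δ / ‖z‖) ≤
      volume {e : ι → ℝ | ‖e‖ ≤ 1 ∧ |e ⬝ᵥ z| ≤ δ} := by
  classical
  obtain ⟨i, hi⟩ := exists_abs_eq_norm hz
  have hzi : z i ≠ 0 := by rw [← abs_pos, hi]; exact norm_pos_iff.2 hz
  have hcard : (1 : ℝ) ≤ Fintype.card ι := by
    exact_mod_cast Fintype.card_pos_iff.2 ⟨i⟩
  have hc0 : (0 : ℝ) < Fintype.card ι := by linarith
  -- if the other coordinates are at most `1 / n`, the slab condition forces `|e i| ≤ 1`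
  set r : ℝ := 1 / Fintype.card ι with hr
  have hr0 : 0 < r := by positivity
  have hr1 : r ≤ 1 := by rw [hr, div_le_one hc0]; exact hcard
  have := volume_slab_box hzi hr0.le hδ
  rw [hi, hr, mul_one_div] at this
  rw [← this]
  refine measure_mono ?_
  rintro e ⟨h1, h2⟩
  rw [← hr] at h2
  refine ⟨(pi_norm_le_iff_of_nonneg zero_le_one).2 fun j => ?_, h2.trans (by nlinarith)⟩
  by_cases hj : j = i
  · subst hj
    have h3 : e ⬝ᵥ z = e j * z j + ∑ k ∈ Finset.univ.erase j, e k * z k := by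
      rw [dotProduct, Finset.add_sum_erase _ (fun k => e k * z k) (Finset.mem_univ j)]
    have h4 : |∑ k ∈ Finset.univ.erase j, e k * z k| ≤ (Fintype.card ι - 1) * (r * ‖z‖) := by
      refine (Finset.abs_sum_le_sum_abs _ _).trans ?_
      have : ∀ k ∈ Finset.univ.erase j, |e k * z k| ≤ r * ‖z‖ := fun k hk => by
        rw [abs_mul]
        exact mul_le_mul (h1 k (Finset.ne_of_mem_erase hk)) (norm_le_pi_norm z k) (abs_nonneg _) hr0.le
      refine (Finset.sum_le_card_nsmul _ _ _ this).trans (le_of_eq ?_)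
      rw [nsmul_eq_mul, Finset.card_erase_of_mem (Finset.mem_univ j), Finset.card_univ,
        Nat.cast_sub (by exact_mod_cast hcard)]
      simp
    have h5 : |e j| * ‖z‖ ≤ 1 * ‖z‖ := by
      rw [← hi, ← abs_mul, hi]
      have h6 : e j * z j = e ⬝ᵥ z - ∑ k ∈ Finset.univ.erase j, e k * z k := by rw [h3]; ring
      rw [h6]
      refine (abs_sub _ _).trans ((add_le_add h2 h4).trans ?_)
      have h7 : (Fintype.card ι : ℝ) * r = 1 := by rw [hr]; field_simp
      have : r * δ ≤ r * ‖z‖ := by gcongr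
      nlinarith
    exact le_of_mul_le_mul_right h5 (norm_pos_iff.2 hz)
  · exact (h1 j hj).trans hr1

end Directions

/-! ### Densities of measures on the line -/

section Line

/-- The rescaled mass `2ᵏ ν(B(s, 2⁻ᵏ))`; since the interval has length `2 · 2⁻ᵏ`, it tends to twice
the density of `ν`. -/
noncomputable def avg (ν : Measure ℝ) (k : ℕ) (s : ℝ) : ℝ≥0∞ :=
  2 ^ k * ν (closedBall s (2 ^ k)⁻¹)

lemma measurable_avg (ν : Measure ℝ) [IsFiniteMeasure ν] (k : ℕ) : Measurable (avg ν k) := by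
  have hS : MeasurableSet {p : ℝ × ℝ | dist p.2 p.1 ≤ (2 ^ k)⁻¹} :=
    measurableSet_le (by fun_prop) measurable_const
  exact (measurable_measure_prodMk_left (ν := ν) hS).const_mul _

lemma volume_closedBall_two_pow (k : ℕ) (s : ℝ) :
    volume (closedBall s (2 ^ k)⁻¹) = 2 * ((2 : ℝ≥0∞) ^ k)⁻¹ := by
  rw [Real.volume_closedBall, ENNReal.ofReal_mul (by norm_num),
    ENNReal.ofReal_inv_of_pos (by positivity), ENNReal.ofReal_pow (by norm_num)]
  simp

lemma tendsto_two_pow_inv : Tendsto (fun k : ℕ => ((2 : ℝ) ^ k)⁻¹) atTop (𝓝[>] 0) := by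
  rw [tendsto_nhdsWithin_iff]
  refine ⟨?_, Eventually.of_forall fun k => by simp⟩
  simp_rw [← inv_pow]
  exact tendsto_pow_atTop_nhds_zero_of_lt_one (by norm_num) (by norm_num)

lemma avg_eq (ν : Measure ℝ) (k : ℕ) (s : ℝ) :
    avg ν k s = 2 * (ν (closedBall s (2 ^ k)⁻¹) / volume (closedBall s (2 ^ k)⁻¹)) := by
  rw [volume_closedBall_two_pow, avg, div_eq_mul_inv, ENNReal.mul_inv (by simp) (by simp), inv_inv]
  rw [mul_comm (ν _), ← mul_assoc, ← mul_assoc, ENNReal.mul_inv_cancel (by simp) (by simp), one_mul]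

lemma tendsto_avg (ν : Measure ℝ) [IsFiniteMeasure ν] :
    ∀ᵐ s, Tendsto (fun k => avg ν k s) atTop (𝓝 (2 * ν.rnDeriv volume s)) := by
  filter_upwards [Besicovitch.ae_tendsto_rnDeriv ν volume] with s hs
  simp_rw [avg_eq]
  exact ENNReal.Tendsto.const_mul (hs.comp tendsto_two_pow_inv) (Or.inr (by simp))

/-- If the averages of `2ᵏ m(B(s, 2⁻ᵏ))` against `m` itself do not tend to `∞`, then `m` is absolutely
continuous: by Fatou the lower density is finite `m`-a.e., so Lebesgue measure has a nonvanishing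
density with respect to `m`. -/
lemma absolutelyContinuous_of_liminf {m : Measure ℝ} [IsFiniteMeasure m]
    (h : liminf (fun k => ∫⁻ s, avg m k s ∂m) atTop ≠ ∞) : m ≪ volume := by
  have hF : ∫⁻ s, liminf (fun k => avg m k s) atTop ∂m ≠ ∞ :=
    ne_top_of_le_ne_top h (lintegral_liminf_le fun k => measurable_avg m k)
  have h1 : ∀ᵐ s ∂m, liminf (fun k => avg m k s) atTop < ∞ :=
    ae_lt_top (.liminf fun k => measurable_avg m k) hF
  have h2 : ∀ᵐ s ∂m, (volume : Measure ℝ).rnDeriv m s ≠ 0 := by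
    filter_upwards [h1, Besicovitch.ae_tendsto_rnDeriv volume m] with s hs1 hs2 h0
    have h3 := hs2.comp tendsto_two_pow_inv
    rw [h0] at h3
    have h4 : Tendsto (fun k => avg m k s) atTop (𝓝 ∞) := by
      have h5 := ENNReal.Tendsto.const_mul (a := 2)
        (tendsto_inv_iff.2 h3) (Or.inr (by simp))
      rw [ENNReal.inv_zero, ENNReal.mul_top (by simp)] at h5
      refine h5.congr fun k => ?_
      rw [avg_eq, Function.comp_apply, ENNReal.inv_div (by simp) (Or.inr ?_)]
      rw [volume_closedBall_two_pow]; simp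
    rw [h4.liminf_eq] at hs1
    exact lt_irrefl _ hs1
  exact (withDensity_absolutelyContinuous' (Measure.measurable_rnDeriv _ _).aemeasurable h2).trans
    (Measure.absolutelyContinuous_of_le (Measure.withDensity_rnDeriv_le _ _))

lemma lintegral_rnDeriv_sq_le {m : Measure ℝ} [IsFiniteMeasure m]
    (h : liminf (fun k => ∫⁻ s, avg m k s ∂m) atTop ≠ ∞) :
    ∫⁻ s, m.rnDeriv volume s ^ 2 ≤ liminf (fun k => ∫⁻ s, avg m k s ∂m) atTop := by
  have hac := absolutelyContinuous_of_liminf h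
  calc ∫⁻ s, m.rnDeriv volume s ^ 2 = ∫⁻ s, m.rnDeriv volume s ∂m := by
        rw [← lintegral_rnDeriv_mul hac (Measure.measurable_rnDeriv _ _).aemeasurable]
        simp_rw [sq]
    _ ≤ ∫⁻ s, liminf (fun k => avg m k s) atTop ∂m := by
        refine lintegral_mono_ae ?_
        filter_upwards [hac.ae_le (tendsto_avg m)] with s hs
        rw [hs.liminf_eq, two_mul]
        exact le_self_add
    _ ≤ _ := lintegral_liminf_le fun k => measurable_avg m k

/-- Averaging at scale `2⁻ᵏ` is bounded on `L²`, uniformly in `k` (Cauchy–Schwarz and Fubini). -/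
lemma lintegral_avg_sq_le {ν : Measure ℝ} [IsFiniteMeasure ν] (hν : ν ≪ volume) (k : ℕ) :
    ∫⁻ s, avg ν k s ^ 2 ≤ 4 * ∫⁻ s, ν.rnDeriv volume s ^ 2 := by
  set g := ν.rnDeriv volume with hg
  have hgm : Measurable g := Measure.measurable_rnDeriv _ _
  have hpt : ∀ s, avg ν k s ^ 2 ≤ 2 * 2 ^ k * ∫⁻ t in closedBall s (2 ^ k)⁻¹, g t ^ 2 := by
    intro s
    have h1 : ν (closedBall s (2 ^ k)⁻¹) = ∫⁻ t in closedBall s (2 ^ k)⁻¹, 1 * g t := by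
      simp only [one_mul]
      exact (Measure.setLIntegral_rnDeriv hν _).symm
    have h2 := ENNReal.lintegral_mul_le_Lp_mul_Lq (volume.restrict (closedBall s (2 ^ k)⁻¹))
      Real.HolderConjugate.two_two (f := fun _ => 1) (g := g) aemeasurable_const hgm.aemeasurable
    have h3 : ν (closedBall s (2 ^ k)⁻¹) ^ 2 ≤
        2 * ((2 : ℝ≥0∞) ^ k)⁻¹ * ∫⁻ t in closedBall s (2 ^ k)⁻¹, g t ^ 2 := by
      rw [h1]
      refine (pow_le_pow_left' h2 2).trans (le_of_eq ?_)
      rw [mul_pow, ← ENNReal.rpow_mul_natCast, ← ENNReal.rpow_mul_natCast]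
      simp
    rw [avg, mul_pow]
    calc ((2 : ℝ≥0∞) ^ k) ^ 2 * ν (closedBall s (2 ^ k)⁻¹) ^ 2
        ≤ ((2 : ℝ≥0∞) ^ k) ^ 2 *
          (2 * ((2 : ℝ≥0∞) ^ k)⁻¹ * ∫⁻ t in closedBall s (2 ^ k)⁻¹, g t ^ 2) := by gcongr
      _ = (2 ^ k * ((2 : ℝ≥0∞) ^ k)⁻¹) *
          (2 * 2 ^ k * ∫⁻ t in closedBall s (2 ^ k)⁻¹, g t ^ 2) := by ring
      _ = _ := by rw [ENNReal.mul_inv_cancel (by simp) (by simp), one_mul]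
  have hS : MeasurableSet {p : ℝ × ℝ | dist p.2 p.1 ≤ (2 ^ k)⁻¹} :=
    measurableSet_le (by fun_prop) measurable_const
  calc ∫⁻ s, avg ν k s ^ 2
      ≤ ∫⁻ s, 2 * 2 ^ k * ∫⁻ t in closedBall s (2 ^ k)⁻¹, g t ^ 2 := lintegral_mono hpt
    _ = 2 * 2 ^ k * ∫⁻ s, ∫⁻ t in closedBall s (2 ^ k)⁻¹, g t ^ 2 := by
        rw [lintegral_const_mul' _ _ (by finiteness)]
    _ = 2 * 2 ^ k * ∫⁻ s, ∫⁻ t, {p : ℝ × ℝ | dist p.2 p.1 ≤ (2 ^ k)⁻¹}.indicator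
          (fun p => g p.2 ^ 2) (s, t) := by
        congr 2; ext s
        rw [← lintegral_indicator isClosed_closedBall.measurableSet]
        rfl
    _ = 2 * 2 ^ k * ∫⁻ t, ∫⁻ s, {p : ℝ × ℝ | dist p.2 p.1 ≤ (2 ^ k)⁻¹}.indicator
          (fun p => g p.2 ^ 2) (s, t) := by
        rw [lintegral_lintegral_swap]
        exact (((hgm.comp measurable_snd).pow_const 2).indicator hS).aemeasurable
    _ = 2 * 2 ^ k * ∫⁻ t, g t ^ 2 * (2 * ((2 : ℝ≥0∞) ^ k)⁻¹) := by
        congr 2; ext t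
        rw [← volume_closedBall_two_pow k t, ← lintegral_indicator_const
          isClosed_closedBall.measurableSet]
        congr 1; ext s
        simp only [indicator, mem_ofPred_eq, mem_closedBall, dist_comm]
    _ = (2 ^ k * ((2 : ℝ≥0∞) ^ k)⁻¹) * (4 * ∫⁻ t, g t ^ 2) := by
        rw [lintegral_mul_const _ (hgm.pow_const 2)]; ring
    _ = _ := by rw [ENNReal.mul_inv_cancel (by simp) (by simp), one_mul]

/-- Young's inequality in `ℝ≥0∞`, with a parameter. -/
lemma mul_le_sq_add (a b η : ℝ≥0∞) (h0 : η ≠ 0) (h1 : η ≠ ∞) :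
    a * b ≤ η⁻¹ * a ^ 2 + η * b ^ 2 := by
  rcases le_total b (η⁻¹ * a) with h | h
  · refine le_trans ?_ le_self_add
    calc a * b ≤ a * (η⁻¹ * a) := by gcongr
      _ = _ := by ring
  · refine le_trans ?_ le_add_self
    have : a ≤ η * b := by
      calc a = η * (η⁻¹ * a) := by rw [← mul_assoc, ENNReal.mul_inv_cancel h0 h1, one_mul]
        _ ≤ _ := by gcongr
    calc a * b ≤ (η * b) * b := by gcongr
      _ = _ := by ring

lemma lintegral_avg_eq {m : Measure ℝ} (ν : Measure ℝ) [IsFiniteMeasure m] [IsFiniteMeasure ν]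
    (hm : m ≪ volume) (k : ℕ) :
    ∫⁻ s, avg ν k s ∂m = ∫⁻ s, m.rnDeriv volume s * avg ν k s :=
  (lintegral_rnDeriv_mul hm (measurable_avg ν k).aemeasurable).symm

lemma lintegral_avg_le {m ν : Measure ℝ} [IsFiniteMeasure m] [IsFiniteMeasure ν]
    (hm : m ≪ volume) (hν : ν ≪ volume) (k : ℕ) :
    ∫⁻ s, avg ν k s ∂m ≤
      (∫⁻ s, m.rnDeriv volume s ^ 2) + 4 * ∫⁻ s, ν.rnDeriv volume s ^ 2 := by
  rw [lintegral_avg_eq ν hm]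
  calc ∫⁻ s, m.rnDeriv volume s * avg ν k s
      ≤ ∫⁻ s, (m.rnDeriv volume s ^ 2 + avg ν k s ^ 2) :=
        lintegral_mono fun s => by
          simpa using mul_le_sq_add (m.rnDeriv volume s) (avg ν k s) 1 (by simp) (by simp)
    _ = (∫⁻ s, m.rnDeriv volume s ^ 2) + ∫⁻ s, avg ν k s ^ 2 :=
        lintegral_add_left ((Measure.measurable_rnDeriv _ _).pow_const 2) _
    _ ≤ _ := by gcongr; exact lintegral_avg_sq_le hν k

/-- If `m` and `ν` have square integrable densities `f`, `g` with `f g = 0` a.e., then the mutual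
averages at scale `2⁻ᵏ` tend to `0`. With `u` the average of `ν`, one writes
`f u ≤ (f u - η u²) + η u²`; the first term is dominated by `η⁻¹ f²` and tends to `0` a.e., and the
second contributes at most `4 η ∫ g²`. -/
lemma tendsto_lintegral_avg {m ν : Measure ℝ} [IsFiniteMeasure m] [IsFiniteMeasure ν]
    (hm : m ≪ volume) (hν : ν ≪ volume)
    (hf : ∫⁻ s, m.rnDeriv volume s ^ 2 ≠ ∞) (hg : ∫⁻ s, ν.rnDeriv volume s ^ 2 ≠ ∞)
    (hfg : ∀ᵐ s, m.rnDeriv volume s = 0 ∨ ν.rnDeriv volume s = 0) :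
    Tendsto (fun k => ∫⁻ s, avg ν k s ∂m) atTop (𝓝 0) := by
  simp_rw [lintegral_avg_eq ν hm]
  set f := m.rnDeriv volume with hfdef
  set g := ν.rnDeriv volume with hgdef
  have hfm : Measurable f := Measure.measurable_rnDeriv _ _
  have key : ∀ η : ℝ≥0∞, η ≠ 0 → η ≠ ∞ →
      Tendsto (fun k => ∫⁻ s, (f s * avg ν k s - η * avg ν k s ^ 2)) atTop (𝓝 0) := by
    intro η h0 h1
    have := tendsto_lintegral_of_dominated_convergence (μ := (volume : Measure ℝ))
      (F := fun k s => f s * avg ν k s - η * avg ν k s ^ 2) (f := fun _ => 0)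
      (fun s => η⁻¹ * f s ^ 2)
      (fun k => (hfm.mul (measurable_avg ν k)).sub
        (((measurable_avg ν k).pow_const 2).const_mul η))
      (fun k => Eventually.of_forall fun s =>
        tsub_le_iff_right.2 (mul_le_sq_add _ _ _ h0 h1))
      (by
        rw [lintegral_const_mul _ (hfm.pow_const 2)]
        exact ENNReal.mul_ne_top (ENNReal.inv_ne_top.2 h0) hf)
      (by
        filter_upwards [hfg, tendsto_avg ν, Measure.rnDeriv_lt_top m volume] with s hs h2 h3
        rcases hs with hs | hs
        · simp [hs]
        · rw [← hgdef, hs, mul_zero] at h2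
          have h4 : Tendsto (fun k => f s * avg ν k s) atTop (𝓝 (f s * 0)) :=
            ENNReal.Tendsto.const_mul h2 (Or.inr h3.ne)
          rw [mul_zero] at h4
          exact tendsto_of_tendsto_of_tendsto_of_le_of_le tendsto_const_nhds h4
            (fun _ => zero_le) (fun k => tsub_le_self))
    simpa using this
  rw [ENNReal.tendsto_atTop_zero]
  intro ε hε
  wlog hεt : ε ≠ ∞ generalizing ε
  · obtain ⟨N, hN⟩ := this 1 one_pos (by simp)
    refine ⟨N, fun k hk => ?_⟩
    rw [not_not.1 hεt]; exact le_top
  set G := 4 * ∫⁻ s, g s ^ 2 with hG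
  have hGt : G ≠ ∞ := ENNReal.mul_ne_top (by simp) hg
  set η := ε / 2 / (G + 1) with hη
  have hη0 : η ≠ 0 := (ENNReal.div_pos (ENNReal.half_pos hε.ne').ne' (by simp [hGt])).ne'
  have hηt : η ≠ ∞ := ENNReal.div_ne_top (ENNReal.div_ne_top hεt (by simp)) (by simp)
  have hηG : η * G ≤ ε / 2 := by
    calc η * G ≤ η * (G + 1) := by gcongr; exact le_self_add
      _ = ε / 2 := ENNReal.div_mul_cancel (by simp) (by simp [hGt])
  obtain ⟨N, hN⟩ := (ENNReal.tendsto_atTop_zero.1 (key η hη0 hηt)) (ε / 2) (ENNReal.half_pos hε.ne')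
  refine ⟨N, fun k hk => ?_⟩
  calc ∫⁻ s, f s * avg ν k s
      ≤ ∫⁻ s, ((f s * avg ν k s - η * avg ν k s ^ 2) + η * avg ν k s ^ 2) :=
        lintegral_mono fun s => le_tsub_add
    _ = (∫⁻ s, (f s * avg ν k s - η * avg ν k s ^ 2)) + ∫⁻ s, η * avg ν k s ^ 2 :=
        lintegral_add_right _ (((measurable_avg ν k).pow_const 2).const_mul η)
    _ ≤ ε / 2 + ε / 2 := by
        refine add_le_add (hN k hk) ?_
        rw [lintegral_const_mul' _ _ hηt]
        refine le_trans ?_ hηG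
        gcongr
        exact lintegral_avg_sq_le hν k
    _ = ε := ENNReal.add_halves ε

end Line

/-! ### Averaging over directions -/

section Average
variable {ι : Type*} [Fintype ι]

/-- The image of `μ` under the projection `x ↦ e ⬝ᵥ x`, for an arbitrary (not necessarily unit)
vector `e`. -/
noncomputable def proj (e : ι → ℝ) (μ : Measure (ι → ℝ)) : Measure ℝ := μ.map fun x => e ⬝ᵥ x

lemma measurable_dot (e : ι → ℝ) : Measurable fun x : ι → ℝ => e ⬝ᵥ x :=
  (continuous_const.dotProduct continuous_id).measurable

instance (e : ι → ℝ) (μ : Measure (ι → ℝ)) [IsFiniteMeasure μ] : IsFiniteMeasure (proj e μ) := by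
  unfold proj; infer_instance

/-- The mutual energy at scale `2⁻ᵏ` of the projections of `μ` and `ν`: a discretized form of
`∫ f g`, with `f` and `g` the densities of the projected measures. -/
noncomputable def mutualEnergy (μ ν : Measure (ι → ℝ)) (k : ℕ) (e : ι → ℝ) : ℝ≥0∞ :=
  ∫⁻ s, avg (proj e ν) k s ∂(proj e μ)

lemma measurableSet_slab (k : ℕ) : MeasurableSet
    {q : (ι → ℝ) × ((ι → ℝ) × (ι → ℝ)) | |q.1 ⬝ᵥ (q.2.1 - q.2.2)| ≤ ((2 : ℝ) ^ k)⁻¹} := by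
  refine measurableSet_le (Continuous.measurable ?_) measurable_const
  exact (continuous_fst.dotProduct (by fun_prop)).abs

lemma mutualEnergy_eq (μ ν : Measure (ι → ℝ)) [IsFiniteMeasure μ] [IsFiniteMeasure ν] (k : ℕ)
    (e : ι → ℝ) :
    mutualEnergy μ ν k e = 2 ^ k * (μ.prod ν) {p | |e ⬝ᵥ (p.1 - p.2)| ≤ ((2 : ℝ) ^ k)⁻¹} := by
  have hS : MeasurableSet {p : (ι → ℝ) × (ι → ℝ) | |e ⬝ᵥ (p.1 - p.2)| ≤ ((2 : ℝ) ^ k)⁻¹} :=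
    (measurableSet_slab k).preimage measurable_prodMk_left
  rw [mutualEnergy, proj, lintegral_map (measurable_avg _ k) (measurable_dot e), Measure.prod_apply hS,
    ← lintegral_const_mul _ (measurable_measure_prodMk_left hS)]
  congr 1; ext x
  rw [avg, proj, Measure.map_apply (measurable_dot e) isClosed_closedBall.measurableSet]
  congr 2; ext y
  simp [Real.dist_eq, dotProduct_sub, abs_sub_comm]

lemma measurable_mutualEnergy (μ ν : Measure (ι → ℝ)) [IsFiniteMeasure μ] [IsFiniteMeasure ν] (k : ℕ) :
    Measurable (mutualEnergy μ ν k) := by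
  have : mutualEnergy μ ν k = fun e =>
      2 ^ k * (μ.prod ν) {p | |e ⬝ᵥ (p.1 - p.2)| ≤ ((2 : ℝ) ^ k)⁻¹} := funext (mutualEnergy_eq μ ν k)
  rw [this]
  exact (measurable_measure_prodMk_left (ν := μ.prod ν) (measurableSet_slab k)).const_mul _

/-- Fubini: integrating the mutual energy over the directions `e` in the unit cube `‖e‖ ≤ 1`
(sup norm) reduces it to the volumes of slabs. -/
lemma lintegral_mutualEnergy (μ ν : Measure (ι → ℝ)) [IsFiniteMeasure μ] [IsFiniteMeasure ν] (k : ℕ) :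
    ∫⁻ e in closedBall 0 1, mutualEnergy μ ν k e = ∫⁻ p, 2 ^ k *
      volume {e : ι → ℝ | ‖e‖ ≤ 1 ∧ |e ⬝ᵥ (p.1 - p.2)| ≤ ((2 : ℝ) ^ k)⁻¹} ∂(μ.prod ν) := by
  have hS := measurableSet_slab (ι := ι) k
  have h1 : ∫⁻ e in closedBall 0 1, mutualEnergy μ ν k e =
      2 ^ k * ((volume.restrict (closedBall (0 : ι → ℝ) 1)).prod (μ.prod ν))
        {q | |q.1 ⬝ᵥ (q.2.1 - q.2.2)| ≤ ((2 : ℝ) ^ k)⁻¹} := by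
    rw [Measure.prod_apply hS, ← lintegral_const_mul _ (measurable_measure_prodMk_left hS)]
    congr 1; ext e
    rw [mutualEnergy_eq]; rfl
  rw [h1, Measure.prod_apply_symm hS, ← lintegral_const_mul _ (measurable_measure_prodMk_right hS)]
  congr 1; ext p
  rw [Measure.restrict_apply (hS.preimage measurable_prodMk_right)]
  congr 2; ext e
  simp [and_comm]

lemma lintegral_mutualEnergy_self_le {μ : Measure (ι → ℝ)} [IsProbabilityMeasure μ] {C : ℝ≥0∞}
    (hμ : ∀ x, ∫⁻ y, (edist x y)⁻¹ ∂μ ≤ C) (k : ℕ) :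
    ∫⁻ e in closedBall 0 1, mutualEnergy μ μ k e ≤ 2 ^ Fintype.card ι * C := by
  rw [lintegral_mutualEnergy]
  calc _ ≤ ∫⁻ p, 2 ^ Fintype.card ι * (edist p.1 p.2)⁻¹ ∂(μ.prod μ) := by
        refine lintegral_mono fun p => ?_
        rcases eq_or_ne p.1 p.2 with h | h
        · simp [h]
        · have hz : p.1 - p.2 ≠ 0 := sub_ne_zero.2 h
          have hz' : 0 < ‖p.1 - p.2‖ := norm_pos_iff.2 hz
          calc _ ≤ 2 ^ k * ENNReal.ofReal (2 ^ Fintype.card ι * ((2 : ℝ) ^ k)⁻¹ / ‖p.1 - p.2‖) := by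
                gcongr
                exact volume_slab_le hz (by positivity)
            _ = ENNReal.ofReal (2 ^ Fintype.card ι * ‖p.1 - p.2‖⁻¹) := by
                have : (2 : ℝ≥0∞) ^ k = ENNReal.ofReal (2 ^ k) := by
                  rw [ENNReal.ofReal_pow (by norm_num)]; simp
                rw [this, ← ENNReal.ofReal_mul (by positivity)]
                congr 1; field_simp
            _ = _ := by
                rw [ENNReal.ofReal_mul (by positivity), ENNReal.ofReal_inv_of_pos hz',
                  ENNReal.ofReal_pow (by norm_num), edist_dist, dist_eq_norm]
                simp
    _ = 2 ^ Fintype.card ι * ∫⁻ x, ∫⁻ y, (edist x y)⁻¹ ∂μ ∂μ := by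
        rw [lintegral_const_mul _ (by fun_prop), lintegral_prod _ (by fun_prop)]
    _ ≤ 2 ^ Fintype.card ι * ∫⁻ x, C ∂μ := by
        gcongr with x
        exact hμ x
    _ = _ := by simp

/-- By Fatou's lemma and `le_volume_slab` the lower limit of the averaged mutual energies is at
least a multiple of the integral of `‖x - y‖⁻¹` against `μ × ν` off the diagonal. It could vanish
only if `μ × ν` were concentrated on the diagonal, which is impossible as `ν` has no atoms. -/
lemma not_tendsto_lintegral_mutualEnergy {μ ν : Measure (ι → ℝ)} [IsProbabilityMeasure μ]
    [IsProbabilityMeasure ν] {C : ℝ≥0∞} (hC : C ≠ ∞)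
    (hν : ∀ x, ∫⁻ y, (edist x y)⁻¹ ∂ν ≤ C) :
    ¬ Tendsto (fun k => ∫⁻ e in closedBall 0 1, mutualEnergy μ ν k e) atTop (𝓝 0) := by
  intro h
  simp_rw [lintegral_mutualEnergy] at h
  set V : ℕ → (ι → ℝ) × (ι → ℝ) → ℝ≥0∞ := fun k p => 2 ^ k *
      volume {e : ι → ℝ | ‖e‖ ≤ 1 ∧ |e ⬝ᵥ (p.1 - p.2)| ≤ ((2 : ℝ) ^ k)⁻¹} with hV
  have hVm : ∀ k, Measurable (V k) := fun k => by
    have hS : MeasurableSet {q : (ι → ℝ) × ((ι → ℝ) × (ι → ℝ)) |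
        ‖q.1‖ ≤ 1 ∧ |q.1 ⬝ᵥ (q.2.1 - q.2.2)| ≤ ((2 : ℝ) ^ k)⁻¹} :=
      (measurableSet_le (f := fun q : (ι → ℝ) × ((ι → ℝ) × (ι → ℝ)) => ‖q.1‖)
        (by fun_prop) measurable_const).inter (measurableSet_slab k)
    exact (measurable_measure_prodMk_right hS).const_mul _
  have h1 : ∫⁻ p, liminf (fun k => V k p) atTop ∂(μ.prod ν) = 0 := by
    refine le_antisymm ((lintegral_liminf_le hVm).trans ?_) zero_le
    rw [h.liminf_eq]
  rw [lintegral_eq_zero_iff (.liminf hVm)] at h1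
  have h2 : ∀ᵐ p ∂(μ.prod ν), p.1 = p.2 := by
    filter_upwards [h1] with p hp
    by_contra hne
    have hz : p.1 - p.2 ≠ 0 := sub_ne_zero.2 hne
    have hz' : 0 < ‖p.1 - p.2‖ := norm_pos_iff.2 hz
    obtain ⟨i₀, -⟩ := Function.ne_iff.1 hz
    have hcard : (0 : ℝ) < Fintype.card ι := by exact_mod_cast Fintype.card_pos_iff.2 ⟨i₀⟩
    have h3 : ENNReal.ofReal ((2 / Fintype.card ι) ^ Fintype.card ι / ‖p.1 - p.2‖) ≤
        liminf (fun k => V k p) atTop := by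
      refine le_liminf_of_le (by isBoundedDefault) ?_
      have h4 : ∀ᶠ k : ℕ in atTop, ((2 : ℝ) ^ k)⁻¹ ≤ ‖p.1 - p.2‖ :=
        (tendsto_two_pow_inv.mono_right nhdsWithin_le_nhds).eventually_le_const hz'
      filter_upwards [h4] with k hk
      refine le_trans (le_of_eq ?_) (mul_le_mul_right (le_volume_slab hz (by positivity) hk) _)
      have : (2 : ℝ≥0∞) ^ k = ENNReal.ofReal (2 ^ k) := by
        rw [ENNReal.ofReal_pow (by norm_num)]; simp
      rw [this, ← ENNReal.ofReal_mul (by positivity)]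
      congr 1; field_simp
    rw [hp] at h3
    have : (0 : ℝ≥0∞) < ENNReal.ofReal ((2 / Fintype.card ι) ^ Fintype.card ι / ‖p.1 - p.2‖) :=
      ENNReal.ofReal_pos.2 (by positivity)
    exact absurd h3 (not_le.2 this)
  obtain ⟨x, hx⟩ := (Measure.ae_ae_of_ae_prod h2).exists
  have h5 : ∫⁻ y, (edist x y)⁻¹ ∂ν = ∞ := by
    have : ∫⁻ y, (edist x y)⁻¹ ∂ν = ∫⁻ y, ∞ ∂ν := by
      refine lintegral_congr_ae ?_
      filter_upwards [hx] with y hy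
      rw [show x = y from hy]; simp
    simpa using this
  exact hC (top_le_iff.1 (h5 ▸ hν x))

lemma rnDeriv_eq_zero_off {m : Measure ℝ} {S : Set ℝ} (hS : MeasurableSet S) (h : m Sᶜ = 0) :
    ∀ᵐ s, s ∉ S → m.rnDeriv volume s = 0 := by
  have h1 : ∫⁻ s in Sᶜ, m.rnDeriv volume s = 0 :=
    le_antisymm ((Measure.setLIntegral_rnDeriv_le _).trans h.le) zero_le
  rw [lintegral_eq_zero_iff (Measure.measurable_rnDeriv _ _)] at h1
  exact (ae_restrict_iff' hS.compl).1 h1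

lemma proj_compl {μ : Measure (ι → ℝ)} {K : Set (ι → ℝ)} (hK : IsCompact K) (h : μ Kᶜ = 0)
    (e : ι → ℝ) : proj e μ ((fun x => e ⬝ᵥ x) '' K)ᶜ = 0 := by
  have hc : IsCompact ((fun x => e ⬝ᵥ x) '' K) :=
    hK.image (continuous_const.dotProduct continuous_id)
  rw [proj, Measure.map_apply (measurable_dot e) hc.measurableSet.compl]
  refine measure_mono_null ?_ h
  intro x hx hxK
  exact hx (mem_image_of_mem _ hxK)

/-- The energy form of Marstrand's projection theorem: for a.e. direction the projection of `μ` is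
absolutely continuous with square integrable density, and the squared `L²` norms have an integrable
majorant `F` over the directions in the unit cube. -/
lemma exists_energy {μ : Measure (ι → ℝ)} [IsProbabilityMeasure μ] {C : ℝ≥0∞} (hC : C ≠ ∞)
    (hμ : ∀ x, ∫⁻ y, (edist x y)⁻¹ ∂μ ≤ C) :
    ∃ F : (ι → ℝ) → ℝ≥0∞, Measurable F ∧ ∫⁻ e in closedBall 0 1, F e ≠ ∞ ∧
      ∀ e, F e ≠ ∞ → proj e μ ≪ volume ∧ ∫⁻ s, (proj e μ).rnDeriv volume s ^ 2 ≤ F e := by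
  refine ⟨fun e => liminf (fun k => mutualEnergy μ μ k e) atTop, .liminf (measurable_mutualEnergy μ μ), ?_,
    fun e he => ⟨absolutelyContinuous_of_liminf he, lintegral_rnDeriv_sq_le he⟩⟩
  refine ne_top_of_le_ne_top (b := 2 ^ Fintype.card ι * C) (by finiteness) ?_
  refine (lintegral_liminf_le (measurable_mutualEnergy μ μ)).trans ?_
  exact liminf_le_of_frequently_le
    (Eventually.of_forall (lintegral_mutualEnergy_self_le hμ)).frequently (by isBoundedDefault)

/-- If the projections of `K` and `L` met in a null set for a.e. direction, the projected measures
would have a.e. disjoint densities, and the mutual energies would tend to `0` pointwise and, by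
domination, in mean, against `not_tendsto_lintegral_mutualEnergy`. -/
theorem volume_directions_ne_zero {μ ν : Measure (ι → ℝ)} [IsProbabilityMeasure μ]
    [IsProbabilityMeasure ν] {C D : ℝ≥0∞} (hC : C ≠ ∞) (hD : D ≠ ∞)
    (hμ : ∀ x, ∫⁻ y, (edist x y)⁻¹ ∂μ ≤ C) (hν : ∀ x, ∫⁻ y, (edist x y)⁻¹ ∂ν ≤ D)
    {K L : Set (ι → ℝ)} (hK : IsCompact K) (hL : IsCompact L) (hμK : μ Kᶜ = 0) (hνL : ν Lᶜ = 0) :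
    volume {e : ι → ℝ | 0 < volume (((fun x => e ⬝ᵥ x) '' K) ∩ ((fun x => e ⬝ᵥ x) '' L))} ≠ 0 := by
  intro hG
  obtain ⟨F, hFm, hF, hF'⟩ := exists_energy hC hμ
  obtain ⟨H, hHm, hH, hH'⟩ := exists_energy hD hν
  refine not_tendsto_lintegral_mutualEnergy (μ := μ) hD hν ?_
  have hgood : ∀ᵐ e ∂(volume.restrict (closedBall (0 : ι → ℝ) 1)), F e ≠ ∞ ∧ H e ≠ ∞ ∧
      volume (((fun x => e ⬝ᵥ x) '' K) ∩ ((fun x => e ⬝ᵥ x) '' L)) = 0 := by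
    filter_upwards [ae_lt_top hFm hF, ae_lt_top hHm hH,
      ae_restrict_of_ae (measure_eq_zero_iff_ae_notMem.1 hG)] with e h1 h2 h3
    exact ⟨h1.ne, h2.ne, by simpa using h3⟩
  have := tendsto_lintegral_of_dominated_convergence
    (μ := volume.restrict (closedBall (0 : ι → ℝ) 1))
    (F := fun k e => mutualEnergy μ ν k e) (f := fun _ => 0) (fun e => F e + 4 * H e)
    (measurable_mutualEnergy μ ν)
    (fun k => by
      filter_upwards [hgood] with e ⟨h1, h2, h3⟩
      obtain ⟨a1, a2⟩ := hF' e h1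
      obtain ⟨b1, b2⟩ := hH' e h2
      refine (lintegral_avg_le a1 b1 k).trans ?_
      gcongr)
    (by
      rw [lintegral_add_left hFm, lintegral_const_mul _ hHm]
      finiteness)
    (by
      filter_upwards [hgood] with e ⟨h1, h2, h3⟩
      obtain ⟨a1, a2⟩ := hF' e h1
      obtain ⟨b1, b2⟩ := hH' e h2
      refine tendsto_lintegral_avg a1 b1 (ne_top_of_le_ne_top h1 a2)
        (ne_top_of_le_ne_top h2 b2) ?_
      have hcK : IsCompact ((fun x => e ⬝ᵥ x) '' K) :=
        hK.image (continuous_const.dotProduct continuous_id)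
      have hcL : IsCompact ((fun x => e ⬝ᵥ x) '' L) :=
        hL.image (continuous_const.dotProduct continuous_id)
      filter_upwards [rnDeriv_eq_zero_off hcK.measurableSet (proj_compl hK hμK e),
        rnDeriv_eq_zero_off hcL.measurableSet (proj_compl hL hνL e),
        measure_eq_zero_iff_ae_notMem.1 h3] with s s1 s2 s3
      by_cases hs : s ∈ (fun x => e ⬝ᵥ x) '' K
      · exact Or.inr (s2 fun h => s3 ⟨hs, h⟩)
      · exact Or.inl (s1 hs))
  simpa using this

end Average

/-! ### From a cone of directions to the sphere -/

section Sphere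

lemma isClosed_proj_graph {ι : Type*} [Fintype ι] {K : Set (ι → ℝ)} (hK : IsCompact K) :
    IsClosed {q : (ι → ℝ) × ℝ | q.2 ∈ (fun x => q.1 ⬝ᵥ x) '' K} := by
  have : CompactSpace K := isCompact_iff_compactSpace.1 hK
  have h1 : IsClosed {q : K × ((ι → ℝ) × ℝ) | q.2.1 ⬝ᵥ (q.1 : ι → ℝ) = q.2.2} :=
    isClosed_eq (Continuous.dotProduct (by fun_prop) (by fun_prop)) (by fun_prop)
  have h2 := isClosedMap_snd_of_compactSpace (X := K) (Y := (ι → ℝ) × ℝ) _ h1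
  convert h2 using 1
  ext ⟨e, s⟩
  simp

lemma measurableSet_directions {ι : Type*} [Fintype ι] {K L : Set (ι → ℝ)} (hK : IsCompact K)
    (hL : IsCompact L) : MeasurableSet
      {e : ι → ℝ | 0 < volume (((fun x => e ⬝ᵥ x) '' K) ∩ ((fun x => e ⬝ᵥ x) '' L))} := by
  have h := measurable_measure_prodMk_left (ν := (volume : Measure ℝ))
    ((isClosed_proj_graph hK).inter (isClosed_proj_graph hL)).measurableSet
  exact measurableSet_lt measurable_const h

lemma smul_mem_directions {ι : Type*} [Fintype ι] {K L : Set (ι → ℝ)} {t : ℝ} (ht : t ≠ 0)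
    {e : ι → ℝ} (he : 0 < volume (((fun x => e ⬝ᵥ x) '' K) ∩ ((fun x => e ⬝ᵥ x) '' L))) :
    0 < volume (((fun x => (t • e) ⬝ᵥ x) '' K) ∩ ((fun x => (t • e) ⬝ᵥ x) '' L)) := by
  have h : ∀ M : Set (ι → ℝ), (fun x => (t • e) ⬝ᵥ x) '' M =
      (fun s => t * s) '' ((fun x => e ⬝ᵥ x) '' M) := fun M => by
    rw [image_image]; simp [smul_dotProduct]
  rw [h, h, ← image_inter (mul_right_injective₀ ht)]
  have := Measure.addHaar_image_homothety (volume : Measure ℝ) (x := 0) (r := t)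
    (((fun x => e ⬝ᵥ x) '' K) ∩ ((fun x => e ⬝ᵥ x) '' L))
  have h3 : (⇑(AffineMap.homothety (0 : ℝ) t)) = fun s => t * s := by
    ext s; simp [AffineMap.homothety_apply]
  rw [h3] at this
  rw [this]
  exact ENNReal.mul_pos (by simpa using ht) he.ne'

variable {m : ℕ}

/-- Central projection onto the hyperplane `u 0 = 1`, in the coordinates of that hyperplane. It is
meaningful only for `u 0 ≠ 0`. -/
noncomputable def central (u : EuclideanSpace ℝ (Fin (m + 1))) : Fin m → ℝ := fun j => u j.succ / u 0

lemma lipschitzOnWith_central {c : ℝ} (hc : 0 < c) :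
    LipschitzOnWith (Real.toNNReal (2 / c ^ 2)) (central (m := m))
      {u | u ∈ sphere (0 : EuclideanSpace ℝ (Fin (m + 1))) 1 ∧ c ≤ u 0} := by
  refine LipschitzOnWith.of_dist_le_mul ?_
  rintro u ⟨hu, hu0⟩ v ⟨hv, hv0⟩
  rw [Real.coe_toNNReal _ (by positivity)]
  refine (dist_pi_le_iff (by positivity)).2 fun j => ?_
  have hco : ∀ (w : EuclideanSpace ℝ (Fin (m + 1))) i, |w i| ≤ ‖w‖ := fun w i => by
    simpa using PiLp.norm_apply_le w i
  have h1 : |u j.succ - v j.succ| ≤ dist u v := by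
    simpa [dist_eq_norm] using hco (u - v) j.succ
  have h2 : |u 0 - v 0| ≤ dist u v := by
    simpa [dist_eq_norm] using hco (u - v) 0
  have hv1 : ‖v‖ = 1 := by simpa using hv
  have h3 : |v j.succ| ≤ 1 := hv1 ▸ hco v _
  have h4 : |v 0| ≤ 1 := hv1 ▸ hco v _
  have hu' : 0 < u 0 := hc.trans_le hu0
  have hv' : 0 < v 0 := hc.trans_le hv0
  rw [Real.dist_eq]
  have h5 : central u j - central v j =
      ((u j.succ - v j.succ) * v 0 - v j.succ * (u 0 - v 0)) / (u 0 * v 0) := by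
    simp only [central]; field_simp; ring
  have h6 : |(u j.succ - v j.succ) * v 0 - v j.succ * (u 0 - v 0)| ≤ 2 * dist u v := by
    refine (abs_sub _ _).trans ?_
    rw [abs_mul, abs_mul]
    have := mul_le_mul h1 h4 (abs_nonneg _) dist_nonneg
    have := mul_le_mul h3 h2 (abs_nonneg _) zero_le_one
    linarith
  rw [h5, abs_div, abs_of_pos (mul_pos hu' hv'), div_mul_eq_mul_div]
  have h7 : c ^ 2 ≤ u 0 * v 0 := by rw [sq]; gcongr
  gcongr

/-- A measurable cone of positive volume meets the sphere in a set of positive `m`-dimensional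
measure. By Fubini its slice by the hyperplane `u 0 = 1` has positive measure, and this slice is
covered by countably many Lipschitz images, under `central`, of pieces of the spherical part. -/
lemma hausdorffMeasure_sphere_ne_zero {G : Set (Fin (m + 1) → ℝ)} (hG : MeasurableSet G)
    (hsmul : ∀ t : ℝ, t ≠ 0 → ∀ e ∈ G, t • e ∈ G) (hvol : volume G ≠ 0) :
    (μH[(m : ℝ)] : Measure (EuclideanSpace ℝ (Fin (m + 1))))
      ({u | (fun i => u i) ∈ G} ∩ sphere 0 1) ≠ 0 := by
  intro h0
  apply hvol
  set Z : Set (EuclideanSpace ℝ (Fin (m + 1))) := {u | (fun i => u i) ∈ G} ∩ sphere 0 1 with hZ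
  set W : Set (Fin m → ℝ) := {w | (Fin.cons 1 w : Fin (m + 1) → ℝ) ∈ G} with hW
  have hWZ : W ⊆ ⋃ k : ℕ, central '' (Z ∩ {u | u ∈ sphere (0 : EuclideanSpace ℝ (Fin (m + 1))) 1 ∧
      1 / ((k : ℝ) + 1) ≤ u 0}) := by
    intro w hw
    set x : EuclideanSpace ℝ (Fin (m + 1)) := WithLp.toLp 2 (Fin.cons 1 w) with hx
    have hx0 : x 0 = 1 := rfl
    have hxn : 0 < ‖x‖ := norm_pos_iff.2 fun h => by simp [h] at hx0
    have hu : ‖x‖⁻¹ • x ∈ sphere (0 : EuclideanSpace ℝ (Fin (m + 1))) 1 := by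
      simp [norm_smul, hxn.ne']
    have hu0 : 0 < (‖x‖⁻¹ • x) 0 := by simp [hx0, hxn]
    obtain ⟨k, hk⟩ := exists_nat_one_div_lt hu0
    refine mem_iUnion.2 ⟨k, ‖x‖⁻¹ • x, ⟨⟨?_, hu⟩, hu, hk.le⟩, ?_⟩
    · exact hsmul _ (inv_ne_zero hxn.ne') _ hw
    · ext j
      have hj : x j.succ = w j := rfl
      simp only [central, PiLp.smul_apply, smul_eq_mul, hx0, hj]
      rw [mul_div_mul_left _ _ (inv_ne_zero hxn.ne'), div_one]
  have hWnull : volume W = 0 := by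
    refine measure_mono_null hWZ (measure_iUnion_null fun k => ?_)
    rw [← hausdorffMeasure_pi_real, Fintype.card_fin]
    refine le_antisymm ?_ zero_le
    refine (((lipschitzOnWith_central (m := m) (c := 1 / ((k : ℝ) + 1)) (by positivity)).mono
      inter_subset_right).hausdorffMeasure_image_le (Nat.cast_nonneg m)).trans ?_
    rw [measure_mono_null inter_subset_left h0, mul_zero]
  have hmp := volume_preserving_piFinSuccAbove (fun _ : Fin (m + 1) => ℝ) 0
  rw [← hmp.symm.measure_preimage_equiv, Measure.volume_eq_prod,
    Measure.measure_prod_null ((MeasurableEquiv.measurable _) hG)]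
  have hne : ∀ᵐ t : ℝ, t ≠ 0 := by
    simp [ae_iff]
  filter_upwards [hne] with t ht
  have hsub : Prod.mk t ⁻¹' ((MeasurableEquiv.piFinSuccAbove (fun _ : Fin (m + 1) => ℝ) 0).symm ⁻¹' G)
      ⊆ (fun v => t⁻¹ • v) ⁻¹' W := by
    intro v hv
    have hv' : (Fin.cons t v : Fin (m + 1) → ℝ) ∈ G := by
      simpa [MeasurableEquiv.piFinSuccAbove, Fin.insertNthEquiv] using hv
    have := hsmul t⁻¹ (inv_ne_zero ht) _ hv'
    show (Fin.cons 1 (t⁻¹ • v) : Fin (m + 1) → ℝ) ∈ G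
    convert this using 1
    ext i
    refine Fin.cases ?_ (fun j => ?_) i
    · simp [ht]
    · simp
  refine measure_mono_null hsub ?_
  rw [Measure.addHaar_preimage_smul _ (inv_ne_zero ht), hWnull, mul_zero]

end Sphere

end ProjInt

/-- Mattila–Orponen: if `A, B ⊆ ℝⁿ` are Borel sets with `dim A > 1` and
`dim B > 1`, then the set of unit vectors `e ∈ S^{n-1}` for which
`L¹(P_e(A) ∩ P_e(B)) > 0` has positive surface measure. -/
theorem projections_intersect_pos (n : ℕ) (hn : 2 ≤ n)
    (A B : Set (EuclideanSpace ℝ (Fin n)))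
    (hA : MeasurableSet A) (hB : MeasurableSet B)
    (hdimA : 1 < dimH A) (hdimB : 1 < dimH B) :
    0 < (μH[(n : ℝ) - 1] :
        Measure (EuclideanSpace ℝ (Fin n))).restrict (sphere 0 1)
      {e : EuclideanSpace ℝ (Fin n) |
        0 < volume (((fun x => ⟪e, x⟫) '' A) ∩ ((fun x => ⟪e, x⟫) '' B))} := by
  obtain ⟨m, rfl⟩ : ∃ m, n = m + 1 := ⟨n - 1, by omega⟩
  have key : ∀ A : Set (EuclideanSpace ℝ (Fin (m + 1))), MeasurableSet A → 1 < dimH A →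
      ∃ (K : Set (Fin (m + 1) → ℝ)) (μ : Measure (Fin (m + 1) → ℝ)) (C : ℝ≥0∞), IsCompact K ∧
        K ⊆ EuclideanSpace.equiv (Fin (m + 1)) ℝ '' A ∧ IsProbabilityMeasure μ ∧ μ Kᶜ = 0 ∧
        C ≠ ∞ ∧ ∀ x, ∫⁻ y, (edist x y)⁻¹ ∂μ ≤ C := fun A hA hd =>
    ProjInt.exists_measure_potential_le
      ((EuclideanSpace.equiv (Fin (m + 1)) ℝ).toHomeomorph.measurableEmbedding.measurableSet_image.2
        hA)
      (by rwa [ContinuousLinearEquiv.dimH_image])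
  obtain ⟨K, μ, C, hK, hKA, hμ, hμK, hC, hμC⟩ := key A hA hdimA
  obtain ⟨L, ν, D, hL, hLB, hν, hνL, hD, hνD⟩ := key B hB hdimB
  have h := ProjInt.hausdorffMeasure_sphere_ne_zero (ProjInt.measurableSet_directions hK hL)
    (fun t ht e he => ProjInt.smul_mem_directions ht he)
    (ProjInt.volume_directions_ne_zero hC hD hμC hνD hK hL hμK hνL)
  rw [Measure.restrict_apply' isClosed_sphere.measurableSet]
  have hexp : ((m + 1 : ℕ) : ℝ) - 1 = m := by push_cast; ring
  rw [hexp]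
  refine (pos_iff_ne_zero.2 h).trans_le (measure_mono ?_)
  rintro e ⟨he, heS⟩
  refine ⟨lt_of_lt_of_le he (measure_mono ?_), heS⟩
  have himg : ∀ {M : Set (Fin (m + 1) → ℝ)} {A : Set (EuclideanSpace ℝ (Fin (m + 1)))},
      M ⊆ EuclideanSpace.equiv (Fin (m + 1)) ℝ '' A →
      (fun x => (fun i => e i) ⬝ᵥ x) '' M ⊆ (fun x => ⟪e, x⟫) '' A := by
    rintro M A hMA _ ⟨x, hx, rfl⟩
    obtain ⟨a, ha, rfl⟩ := hMA hx
    refine ⟨a, ha, ?_⟩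
    simp [PiLp.inner_apply, dotProduct, mul_comm]
  exact Set.inter_subset_inter (himg hKA) (himg hLB)
end
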